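/- arXiv:1803.04082 — 3 statements merged into one kernel-verified Lean document; each statement's English description precedes it below -/
import Mathlib

section
/- Let a < b be real numbers and f : [a,b] → [a,b] a continuous map for which there exist l ≥ 1 and points a = c₀ < c₁ < ⋯ < c_l = b such that f is strictly monotone (strictly increasing or strictly decreasing) on each lap [c_{i−1}, c_i]. Assume that each interior partition point cᵢ (0 < i < l) is attracted to a periodic orbit of f: there exist an integer m ≥ 1 and a point p ∈ [a,b] with f^m(p) = p such that f^{m·n}(cᵢ) → p as n → ∞. Then the topological entropy h := h_top(f, [a,b]) is a finite nonnegative real number and exp(h) is an algebraic number (algebraic over ℚ). -/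
open Set Filter Topology

/-!
The entropy of a piecewise strictly monotone map `g` is the exponential growth rate `s` of its lap
counts, that is, of the numbers of points whose orbit meets the set `C` of turning points before
time `n`. Counting these points by the time `n` and the place `w ∈ C` of the first visit to `C`
gives generating series `Γ_w`, and the kneading identity of Milnor and Thurston says that the
kneading matrix `ν` maps the vector `Γ` to series with bounded coefficients. If the turning points
are attracted to periodic orbits, then the one-sided orbits of `w⁺` and `w⁻` eventually have the
itinerary of a one-sided point on a periodic orbit, hence the entries of `ν` are rational. As `ν` is
the identity at `t = 0`, Cramer's rule provides a nonzero integral polynomial `d` such that all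
`d * Γ_w` have bounded coefficients. If `s > 0`, then `exp (-s)` lies inside the unit disc, where
`d * ∑ w, Γ_w` converges, while `∑ w, Γ_w` diverges at `exp (-s)`, which is therefore a root of `d`.
-/

/-- `g` is piecewise strictly monotone with turning points in `C`. Injectivity encodes strict
monotonicity on the laps: a continuous map is injective on an interval if and only if it is
strictly increasing or strictly decreasing there. -/
structure IsPiecewiseMonotone {α : Type*} [Preorder α] [TopologicalSpace α] (g : α → α)
    (C : Set α) : Prop where
  continuous : Continuous g
  injOn : ∀ ⦃u v⦄, Disjoint C (Ioo u v) → InjOn g (Icc u v)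

section Precritical

variable {X : Type*} (g : X → X) (C : Set X)

/-- The points whose orbit meets the set `C` of turning points before time `n`: the turning
points of the iterate `g^[n]` are among them. -/
def precritical (n : ℕ) : Set X :=
  {z | ∃ j < n, g^[j] z ∈ C}

theorem precritical_mono : Monotone (precritical g C) :=
  fun _ _ hmn _ ⟨j, hj, hz⟩ => ⟨j, hj.trans_le hmn, hz⟩

theorem precritical_zero : precritical g C 0 = ∅ := by
  simp [precritical]

theorem precritical_add (m n : ℕ) :
    precritical g C (m + n) = precritical g C m ∪ g^[m] ⁻¹' precritical g C n := by
  ext z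
  constructor
  · rintro ⟨j, hj, hz⟩
    rcases lt_or_ge j m with hjm | hmj
    · exact Or.inl ⟨j, hjm, hz⟩
    · refine Or.inr ⟨j - m, by lia, ?_⟩
      rwa [← Function.iterate_add_apply, Nat.sub_add_cancel hmj]
  · rintro (⟨j, hj, hz⟩ | ⟨j, hj, hz⟩)
    · exact ⟨j, by lia, hz⟩
    · exact ⟨j + m, by lia, by rwa [Function.iterate_add_apply]⟩

theorem precritical_one : precritical g C 1 = C := by
  simp [precritical]

theorem precritical_succ (n : ℕ) :
    precritical g C (n + 1) = C ∪ g ⁻¹' precritical g C n := by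
  rw [add_comm, precritical_add, precritical_one, Function.iterate_one]

end Precritical

section IntermediateValue

variable {α : Type*} [ConditionallyCompleteLinearOrder α] [TopologicalSpace α] [OrderTopology α]
  [DenselyOrdered α] {g : α → α} {u v : α}

theorem uIoo_subset_image_Ioo (huv : u ≤ v) (hg : ContinuousOn g (Icc u v)) :
    uIoo (g u) (g v) ⊆ g '' Ioo u v := by
  rcases le_total (g u) (g v) with h | h
  · simpa only [uIoo_of_le h] using intermediate_value_Ioo huv hg
  · simpa only [uIoo_of_ge h] using intermediate_value_Ioo' huv hg

theorem mapsTo_uIcc_of_injOn (huv : u ≤ v) (hg : ContinuousOn g (Icc u v))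
    (hinj : InjOn g (Icc u v)) : MapsTo g (Icc u v) (uIcc (g u) (g v)) := by
  intro z hz
  have hu := left_mem_Icc.2 huv
  have hv := right_mem_Icc.2 huv
  rcases hg.strictMonoOn_of_injOn_Icc' huv hinj with h | h
  · exact mem_uIcc_of_le (h.monotoneOn hu hz hz.1) (h.monotoneOn hz hv hz.2)
  · exact mem_uIcc_of_ge (h.antitoneOn hz hv hz.2) (h.antitoneOn hu hz hz.1)

theorem mapsTo_uIoo_of_injOn (huv : u ≤ v) (hg : ContinuousOn g (Icc u v))
    (hinj : InjOn g (Icc u v)) : MapsTo g (Ioo u v) (uIoo (g u) (g v)) := by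
  intro z hz
  have hu := left_mem_Icc.2 huv
  have hv := right_mem_Icc.2 huv
  have hzI := Ioo_subset_Icc_self hz
  rcases hg.strictMonoOn_of_injOn_Icc' huv hinj with h | h
  · exact mem_uIoo_of_lt (h hu hzI hz.1) (h hzI hv hz.2)
  · exact mem_uIoo_of_gt (h hzI hv hz.2) (h hu hzI hz.1)

end IntermediateValue

section LapCount

variable {α : Type*} [ConditionallyCompleteLinearOrder α] [TopologicalSpace α] [OrderTopology α]
  [DenselyOrdered α] {g : α → α} {C : Set α}

namespace IsPiecewiseMonotone

variable {u v : α}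

theorem strictMonoOn_or_strictAntiOn (hg : IsPiecewiseMonotone g C) (huv : u ≤ v)
    (h : Disjoint C (Ioo u v)) : StrictMonoOn g (Icc u v) ∨ StrictAntiOn g (Icc u v) :=
  hg.continuous.continuousOn.strictMonoOn_of_injOn_Icc' huv (hg.injOn h)

theorem injOn_iterate (hg : IsPiecewiseMonotone g C) {n : ℕ}
    (h : Disjoint (precritical g C n) (Ioo u v)) : InjOn g^[n] (Icc u v) := by
  induction n generalizing u v with
  | zero => exact injOn_id _
  | succ n ih =>
    rcases lt_or_ge v u with hvu | huv
    · simp [Icc_eq_empty hvu.not_ge]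
    rw [precritical_succ, disjoint_union_left] at h
    have hinj := hg.injOn h.1
    have hcont := hg.continuous.continuousOn (s := Icc u v)
    have hdisj : Disjoint (precritical g C n) (uIoo (g u) (g v)) :=
      disjoint_left.2 fun y hy hmem => by
        obtain ⟨z, hz, rfl⟩ := uIoo_subset_image_Ioo huv hcont hmem
        exact disjoint_left.1 h.2 hy hz
    exact (ih hdisj).comp hinj (mapsTo_uIcc_of_injOn huv hcont hinj)

end IsPiecewiseMonotone

theorem finite_and_ncard_le_of_interleaved {X : Type*} [LinearOrder X] {s t : Set X}
    (ht : t.Finite) (h : ∀ x ∈ s, ∀ y ∈ s, x < y → (t ∩ Ioo x y).Nonempty) :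
    s.Finite ∧ s.ncard ≤ t.ncard + 1 := by
  have card_le (r : Finset X) (hr : (r : Set X) ⊆ s) : r.card ≤ t.ncard + 1 := by
    rw [ncard_eq_toFinset_card t ht]
    refine Finset.card_le_of_interleaved fun x hx y hy hxy _ => ?_
    obtain ⟨z, hz, hxz, hzy⟩ := h x (hr hx) y (hr hy) hxy
    exact ⟨z, ht.mem_toFinset.2 hz, hxz, hzy⟩
  have hs : s.Finite := by
    by_contra hs
    obtain ⟨r, hr, hcard⟩ := Set.Infinite.exists_subset_card_eq hs (t.ncard + 2)
    have := card_le r hr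
    lia
  exact ⟨hs, by simpa [ncard_eq_toFinset_card s hs] using card_le hs.toFinset (by simp)⟩

/-- An upper bound for the number of laps of `g^[n]`: the precritical points of order `n` cut the
space into this many pieces. -/
noncomputable def lapCount {X : Type*} (g : X → X) (C : Set X) (n : ℕ) : ℕ :=
  (precritical g C n).ncard + 1

namespace IsPiecewiseMonotone

theorem finite_preimage_iterate (hg : IsPiecewiseMonotone g C) {n : ℕ}
    (hfin : (precritical g C n).Finite) {D : Set α} (hD : D.Finite) :
    (g^[n] ⁻¹' D).Finite ∧ (g^[n] ⁻¹' D).ncard ≤ D.ncard * lapCount g C n := by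
  have fibre (d : α) :
      (g^[n] ⁻¹' {d}).Finite ∧ (g^[n] ⁻¹' {d}).ncard ≤ lapCount g C n := by
    refine finite_and_ncard_le_of_interleaved hfin fun x hx y hy hxy => ?_
    by_contra hempty
    have hinj := hg.injOn_iterate
      (disjoint_iff_inter_eq_empty.2 (not_nonempty_iff_eq_empty.1 hempty))
    exact hxy.ne (hinj (left_mem_Icc.2 hxy.le) (right_mem_Icc.2 hxy.le) (hx.trans hy.symm))
  have hunion : g^[n] ⁻¹' D = ⋃ d ∈ hD.toFinset, g^[n] ⁻¹' {d} := by
    ext; simp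
  refine ⟨hD.preimage' fun d _ => (fibre d).1, ?_⟩
  calc (g^[n] ⁻¹' D).ncard = (⋃ d ∈ hD.toFinset, g^[n] ⁻¹' {d}).ncard := by rw [hunion]
    _ ≤ ∑ d ∈ hD.toFinset, (g^[n] ⁻¹' {d}).ncard := Finset.set_ncard_biUnion_le _ _
    _ ≤ hD.toFinset.card * lapCount g C n := by
      simpa using Finset.sum_le_card_nsmul _ _ _ fun d _ => (fibre d).2
    _ = D.ncard * lapCount g C n := by rw [ncard_eq_toFinset_card D hD]

theorem finite_precritical (hg : IsPiecewiseMonotone g C) (hC : C.Finite) (n : ℕ) :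
    (precritical g C n).Finite := by
  induction n with
  | zero => simp [precritical_zero]
  | succ n ih =>
    rw [precritical_add, precritical_one]
    exact ih.union (hg.finite_preimage_iterate ih hC).1

theorem lapCount_add_le (hg : IsPiecewiseMonotone g C) (hC : C.Finite) (m n : ℕ) :
    lapCount g C (m + n) ≤ lapCount g C m * lapCount g C n := by
  have hpre := (hg.finite_preimage_iterate (hg.finite_precritical hC m)
    (hg.finite_precritical hC n)).2
  calc lapCount g C (m + n)
      = (precritical g C m ∪ g^[m] ⁻¹' precritical g C n).ncard + 1 := by
        rw [lapCount, precritical_add]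
    _ ≤ (precritical g C m).ncard + (precritical g C n).ncard * lapCount g C m + 1 := by
        gcongr
        exact (ncard_union_le _ _).trans (by gcongr)
    _ = lapCount g C m * lapCount g C n := by simp only [lapCount]; ring

theorem lapCount_mono (hg : IsPiecewiseMonotone g C) (hC : C.Finite) : Monotone (lapCount g C) :=
  fun _ n hmn => Nat.add_le_add_right
    (ncard_le_ncard (precritical_mono g C hmn) (hg.finite_precritical hC n)) 1

end IsPiecewiseMonotone

end LapCount

section ExpGrowth

open ENNReal ExpGrowth

theorem exp_coe_mul_natCast (r : ℝ) (n : ℕ) :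
    EReal.exp ((r : EReal) * n) = ENNReal.ofReal (Real.exp (r * n)) := by
  rw [← EReal.exp_coe, EReal.coe_mul, EReal.coe_natCast]

theorem exists_growthRate_of_submultiplicative {u : ℕ → ℕ} (hone : ∀ n, 1 ≤ u n)
    (hmul : ∀ m n, u (m + n) ≤ u m * u n) :
    ∃ s : ℝ, 0 ≤ s ∧ (∀ n : ℕ, Real.exp (s * n) ≤ u n) ∧
      ∀ r > s, ∀ᶠ n : ℕ in atTop, (u n : ℝ) ≤ Real.exp (r * n) := by
  have hpos (n : ℕ) : (0 : ℝ) < u n := by exact_mod_cast hone n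
  have hsub : Subadditive fun n => Real.log (u n) := fun m n => by
    rw [← Real.log_mul (hpos m).ne' (hpos n).ne']
    exact Real.log_le_log (hpos _) (by exact_mod_cast hmul m n)
  have hnonneg (n : ℕ) : 0 ≤ Real.log (u n) / n :=
    div_nonneg (Real.log_natCast_nonneg _) n.cast_nonneg
  have hbdd : BddBelow (range fun n : ℕ => Real.log (u n) / n) :=
    ⟨0, forall_mem_range.2 hnonneg⟩
  have hlim := hsub.tendsto_lim hbdd
  refine ⟨hsub.lim, ge_of_tendsto' hlim hnonneg, fun n => ?_, fun r hr => ?_⟩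
  · rcases n.eq_zero_or_pos with rfl | hn
    · simpa using hone 0
    · rw [← Real.le_log_iff_exp_le (hpos n), ← le_div_iff₀ (by exact_mod_cast hn)]
      exact hsub.lim_le_div hbdd hn.ne'
  · filter_upwards [hlim.eventually_lt_const hr, eventually_gt_atTop 0] with n hlt hn
    rw [← Real.log_le_iff_le_exp (hpos n), ← div_le_iff₀ (by exact_mod_cast hn)]
    exact hlt.le

theorem expGrowthSup_natCast_eq {u : ℕ → ℕ} {s : ℝ} (hlower : ∀ n : ℕ, Real.exp (s * n) ≤ u n)
    (hupper : ∀ r > s, ∀ᶠ n : ℕ in atTop, (u n : ℝ) ≤ Real.exp (r * n)) :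
    expGrowthSup (fun n => (u n : ℝ≥0∞)) = s := by
  apply le_antisymm
  · refine EReal.le_of_forall_lt_iff_le.1 fun r hr => Eventually.expGrowthSup_le ?_
    filter_upwards [hupper r (EReal.coe_lt_coe_iff.1 hr)] with n hn
    rw [exp_coe_mul_natCast, ← ENNReal.ofReal_natCast]
    exact ENNReal.ofReal_le_ofReal hn
  · refine Frequently.le_expGrowthSup (Frequently.of_forall fun n => ?_)
    rw [exp_coe_mul_natCast, ← ENNReal.ofReal_natCast]
    exact ENNReal.ofReal_le_ofReal (hlower n)

theorem expGrowthSup_le_of_le_linear_mul {u v : ℕ → ℝ≥0∞} (d : ℕ)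
    (h : ∀ n, u n ≤ (d * n + 1 : ℕ) * v n) : expGrowthSup u ≤ expGrowthSup v := by
  have hlin : expGrowthSup (fun n => ((d * n + 1 : ℕ) : ℝ≥0∞)) ≤ 0 := by
    refine EReal.le_of_forall_lt_iff_le.1 fun r hr => ?_
    have hr : 0 < r := by exact_mod_cast hr
    rw [← expGrowthSup_exp (a := r)]
    refine expGrowthSup_le_of_eventually_le (b := ENNReal.ofReal (d / r + 1)) ENNReal.ofReal_ne_top
      (Eventually.of_forall fun n => ?_)
    rw [exp_coe_mul_natCast, ← ENNReal.ofReal_natCast, ← ENNReal.ofReal_mul (by positivity)]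
    refine ENNReal.ofReal_le_ofReal ?_
    calc ((d * n + 1 : ℕ) : ℝ) ≤ (d / r + 1) * (r * n + 1) := by
          have : (d / r + 1) * (r * n + 1) = d * n + 1 + (d / r + r * n) := by field_simp; ring
          push_cast
          linarith [show 0 ≤ d / r + r * n by positivity]
      _ ≤ (d / r + 1) * Real.exp (r * n) := by
          gcongr
          exact Real.add_one_le_exp _
  have hone : 0 ≤ expGrowthSup (fun n => ((d * n + 1 : ℕ) : ℝ≥0∞)) := by
    refine Frequently.le_expGrowthSup (Frequently.of_forall fun n => ?_)
    simp
  have hzero := le_antisymm hlin hone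
  calc expGrowthSup u ≤ expGrowthSup ((fun n => ((d * n + 1 : ℕ) : ℝ≥0∞)) * v) :=
        expGrowthSup_monotone h
    _ ≤ expGrowthSup (fun n => ((d * n + 1 : ℕ) : ℝ≥0∞)) + expGrowthSup v :=
        expGrowthSup_mul_le (.inl (hzero ▸ EReal.zero_ne_bot)) (.inl (hzero ▸ EReal.zero_ne_top))
    _ = expGrowthSup v := by rw [hzero, zero_add]

end ExpGrowth

section Entropy

open Dynamics UniformSpace Uniformity ENNReal ExpGrowth

theorem pow_div_le_exp {b : ℝ} (hb : 1 ≤ b) (n k : ℕ) :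
    b ^ (n / k) ≤ Real.exp (Real.log b / k * n) := by
  have hb0 : 0 < b := by linarith
  calc b ^ (n / k) = Real.exp (Real.log b * (n / k : ℕ)) := by
        rw [mul_comm, Real.exp_nat_mul, Real.exp_log hb0]
    _ ≤ Real.exp (Real.log b * (n / k)) := by
        gcongr
        · exact Real.log_nonneg hb
        · exact Nat.cast_div_le
    _ = Real.exp (Real.log b / k * n) := by ring_nf

variable {α : Type*} [CompleteLinearOrder α] [UniformSpace α] [OrderTopology α]

theorem exists_entourage_unique_crossing {S : Set α} (hS : S.Finite) :
    ∃ V ∈ 𝓤 α, ∃ w : α → α, ∀ x, ∀ p ∈ ball x V,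
      ∀ q ∈ ball x V, ∀ s ∈ S ∩ uIcc p q, s = w x := by
  obtain ⟨V, hV, hball⟩ := lebesgue_number_lemma_nhds (isCompact_univ (X := α))
    (U := fun x => ordConnectedComponent (S \ {x})ᶜ x) fun x _ =>
      ordConnectedComponent_mem_nhds.2 (hS.sdiff.isClosed.isOpen_compl.mem_nhds (by simp))
  choose! w hw using hball
  refine ⟨V, hV, w, fun x p hp q hq s ⟨hs, hmem⟩ => ?_⟩
  by_contra hne
  exact ordConnectedComponent_subset
    (OrdConnected.uIcc_subset inferInstance (hw x trivial hp) (hw x trivial hq) hmem)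
    ⟨hs, hne⟩

variable [DenselyOrdered α]

theorem exists_finite_separating_of_mem_uniformity {U : SetRel α α} (hU : U ∈ 𝓤 α) :
    ∃ D : Set α, D.Finite ∧ ∀ x y, (x, y) ∉ U → (D ∩ uIoo x y).Nonempty := by
  obtain ⟨V, ⟨hV, hVopen⟩, hVU : V ⊆ U⟩ := uniformity_hasBasis_open.mem_iff.1 hU
  have hopen (d : α) : IsOpen {p : α × α | d ∈ uIoo p.1 p.2} :=
    (isOpen_lt (by fun_prop) (by fun_prop)).inter (isOpen_lt (by fun_prop) (by fun_prop))
  have hcover : Vᶜ ⊆ ⋃ d, {p : α × α | d ∈ uIoo p.1 p.2} := fun p hp => by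
    have hne : p.1 ≠ p.2 := fun heq => hp (mem_uniformity_of_eq hV heq)
    obtain ⟨d, hd⟩ := exists_between (inf_lt_sup.2 hne)
    exact mem_iUnion.2 ⟨d, hd⟩
  obtain ⟨D, hD⟩ := hVopen.isClosed_compl.isCompact.elim_finite_subcover _ hopen hcover
  refine ⟨D, D.finite_toSet, fun x y hxy => ?_⟩
  obtain ⟨d, hd, hmem⟩ := mem_iUnion₂.1 (hD (show (x, y) ∈ Vᶜ from fun h => hxy (hVU h)))
  exact ⟨d, hd, hmem⟩

variable {g : α → α} {C : Set α}

namespace IsPiecewiseMonotone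

/-- Between two consecutive points of the orbit-preimages of a separating set, orbits stay
`U`-close: a separation would be detected by an intermediate value. -/
theorem coverMincard_le (hg : IsPiecewiseMonotone g C) (hC : C.Finite) {U : SetRel α α} {D : Set α}
    (hD : D.Finite) (hsep : ∀ x y, (x, y) ∉ U → (D ∩ uIoo x y).Nonempty) (n : ℕ) :
    coverMincard g univ U n ≤ ((D.ncard * n + 1) * lapCount g C n : ℕ) := by
  have hpre (j : ℕ) := hg.finite_preimage_iterate (hg.finite_precritical hC j) hD
  set P : Set α := ⋃ j ∈ Finset.range n, g^[j] ⁻¹' D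
  have hP : P.Finite := (Finset.range n).finite_toSet.biUnion fun j _ => (hpre j).1
  have hcard : P.ncard ≤ D.ncard * n * lapCount g C n := calc
    P.ncard ≤ ∑ j ∈ Finset.range n, (g^[j] ⁻¹' D).ncard := Finset.set_ncard_biUnion_le _ _
    _ ≤ ∑ _ ∈ Finset.range n, D.ncard * lapCount g C n := Finset.sum_le_sum fun j hj =>
        (hpre j).2.trans (Nat.mul_le_mul_left _ (hg.lapCount_mono hC (Finset.mem_range.1 hj).le))
    _ = D.ncard * n * lapCount g C n := by
        rw [Finset.sum_const, Finset.card_range, smul_eq_mul]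
        ring
  have hcover : IsDynCoverOf g univ U n (insert ⊥ hP.toFinset : Finset α) := by
    intro x _
    obtain ⟨p, hp, hmax⟩ := ((insert ⊥ hP.toFinset).filter (· ≤ x)).exists_max_image id
      ⟨⊥, by simp⟩
    obtain ⟨hpP, hpx⟩ := Finset.mem_filter.1 hp
    refine ⟨p, hpP, mem_dynEntourage.2 fun j hj => ?_⟩
    by_contra hnot
    obtain ⟨d, hd, hmem⟩ := hsep _ _ hnot
    rw [uIoo_comm] at hmem
    obtain ⟨z, hz, rfl⟩ :=
      uIoo_subset_image_Ioo hpx (hg.continuous.iterate j).continuousOn hmem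
    have hzP : z ∈ P := mem_iUnion₂.2 ⟨j, Finset.mem_range.2 hj, hd⟩
    exact hz.1.not_ge (hmax z (by simp [hzP, hz.2.le]))
  calc coverMincard g univ U n
      ≤ (insert ⊥ hP.toFinset : Finset α).card := hcover.coverMincard_le_card
    _ ≤ ((D.ncard * n + 1) * lapCount g C n : ℕ) := by
      norm_cast
      have := Finset.card_insert_le ⊥ hP.toFinset
      rw [← ncard_eq_toFinset_card P hP] at this
      have : 1 ≤ lapCount g C n := Nat.le_add_left _ _
      linarith

theorem coverEntropy_le (hg : IsPiecewiseMonotone g C) (hC : C.Finite) :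
    coverEntropy g univ ≤ expGrowthSup (fun n => (lapCount g C n : ℝ≥0∞)) := by
  refine iSup₂_le fun U hU => ?_
  obtain ⟨D, hD, hsep⟩ := exists_finite_separating_of_mem_uniformity hU
  refine expGrowthSup_le_of_le_linear_mul D.ncard fun n => ?_
  have := ENat.toENNReal_le.2 (hg.coverMincard_le hC hD hsep n)
  simpa using this

theorem strictMonoOn_or_strictAntiOn_iterate (hg : IsPiecewiseMonotone g C) {n : ℕ} {u v : α}
    (huv : u ≤ v) (h : Disjoint (precritical g C n) (Ioo u v)) :
    StrictMonoOn g^[n] (Icc u v) ∨ StrictAntiOn g^[n] (Icc u v) :=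
  (hg.continuous.iterate n).continuousOn.strictMonoOn_of_injOn_Icc' huv (hg.injOn_iterate h)

/-- At the first time `q * k` at which the orbit segment between `z` and `z'` contains a precritical
point of order `k`, that point separates the two orbits. -/
theorem exists_precritical_separating (hg : IsPiecewiseMonotone g C) {k n : ℕ} (hk : 0 < k)
    {z z' : α} (hzz' : z < z') (hz' : z' ∈ precritical g C n) :
    ∃ q, q * k < n ∧ ∃ y ∈ precritical g C k ∩ uIcc (g^[q * k] z) (g^[q * k] z'),
      cmp (g^[q * k] z) y ≠ cmp (g^[q * k] z') y := by
  have split {ζ : α} {j : ℕ} (hζ : g^[j] ζ ∈ C) : g^[j / k * k] ζ ∈ precritical g C k :=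
    ⟨j % k, Nat.mod_lt j hk, by rwa [← Function.iterate_add_apply, Nat.mod_add_div']⟩
  have hex : ∃ q, ∃ ζ ∈ Ioc z z', g^[q * k] ζ ∈ precritical g C k := by
    obtain ⟨j, -, hj⟩ := hz'
    exact ⟨j / k, z', ⟨hzz', le_rfl⟩, split hj⟩
  classical
  obtain ⟨ζ, hζ, hmem⟩ := Nat.find_spec hex
  set q := Nat.find hex
  have hdisj : Disjoint (precritical g C (q * k)) (Ioo z z') :=
    disjoint_left.2 fun y ⟨j, hj, hy⟩ hyI =>
      Nat.find_min hex (Nat.div_lt_of_lt_mul (by rwa [mul_comm])) ⟨y, ⟨hyI.1, hyI.2.le⟩, split hy⟩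
  have hz := left_mem_Icc.2 hzz'.le
  have hz'I := right_mem_Icc.2 hzz'.le
  have hζI := Ioc_subset_Icc_self hζ
  refine ⟨q, ?_, g^[q * k] ζ, ⟨hmem, ?_⟩, ?_⟩
  · obtain ⟨j, hj, hjC⟩ := hz'
    have hle : q ≤ j / k := Nat.find_le ⟨z', ⟨hzz', le_rfl⟩, split hjC⟩
    exact (Nat.mul_le_mul_right k hle).trans_lt ((Nat.div_mul_le_self j k).trans_lt hj)
  · exact mapsTo_uIcc_of_injOn hzz'.le (hg.continuous.iterate _).continuousOn
      (hg.injOn_iterate hdisj) hζI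
  · rcases hg.strictMonoOn_or_strictAntiOn_iterate hzz'.le hdisj with hmono | hanti
    · have hlt := hmono hz hζI hζ.1
      have hle := hmono.monotoneOn hζI hz'I hζ.2
      intro hcmp
      rw [(cmp_eq_lt_iff _ _).2 hlt, eq_comm, cmp_eq_lt_iff] at hcmp
      exact hle.not_gt hcmp
    · have hlt := hanti hz hζI hζ.1
      have hle := hanti.antitoneOn hζI hz'I hζ.2
      intro hcmp
      rw [(cmp_eq_gt_iff _ _).2 hlt, eq_comm, cmp_eq_gt_iff] at hcmp
      exact hle.not_gt hcmp

/-- A precritical point is determined by the centre of a dynamical ball around it together with its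
position, at the multiples of `k`, relative to the only possible crossing point in that ball. -/
theorem exists_ncard_precritical_le (hg : IsPiecewiseMonotone g C) (hC : C.Finite) {k : ℕ}
    (hk : 0 < k) :
    ∃ V ∈ 𝓤 α, ∀ n, ∀ s : Finset α, IsDynCoverOf g univ V n s →
      (precritical g C n).ncard ≤ s.card * 3 ^ (n / k + 1) := by
  obtain ⟨V, hV, w, hw⟩ := exists_entourage_unique_crossing (hg.finite_precritical hC k)
  have hVsymm := symmetrize_mem_uniformity hV
  refine ⟨SetRel.symmetrize V, hVsymm, fun n s hs => ?_⟩
  choose centre hcentre hclose using fun z : α => hs (mem_univ z)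
  have hball (z : α) {j : ℕ} (hj : j < n) : g^[j] z ∈ ball (g^[j] (centre z)) V :=
    SetRel.symmetrize_subset_inv (mem_dynEntourage.1 (hclose z) j hj)
  let code (z : α) : α × (Fin (n / k + 1) → Ordering) :=
    (centre z, fun q => cmp (g^[q * k] z) (w (g^[q * k] (centre z))))
  have hinj : InjOn code (precritical g C n) := by
    intro z hz z' hz' heq
    wlog hlt : z < z' generalizing z z'
    · rcases (not_lt.1 hlt).eq_or_lt with h | h
      · exact h.symm
      · exact (this hz' hz heq.symm h).symm
    obtain ⟨q, hqn, y, ⟨hy, hmem⟩, hcmp⟩ := hg.exists_precritical_separating hk hlt hz'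
    have hcentre_eq : centre z = centre z' := congrArg Prod.fst heq
    have hyw := hw _ _ (hball z hqn) _ (hcentre_eq ▸ hball z' hqn) y ⟨hy, hmem⟩
    have hq : q < n / k + 1 := Nat.lt_succ_of_le ((Nat.le_div_iff_mul_le hk).2 hqn.le)
    have hcode := congrFun (congrArg Prod.snd heq) ⟨q, hq⟩
    simp only [code, ← hcentre_eq, ← hyw] at hcode
    exact absurd hcode hcmp
  calc (precritical g C n).ncard
      ≤ ((s ×ˢ Finset.univ : Finset (α × (Fin (n / k + 1) → Ordering))) : Set _).ncard :=
        ncard_le_ncard_of_injOn code (fun z _ => by simpa [code] using hcentre z) hinj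
          (Finset.finite_toSet _)
    _ = s.card * 3 ^ (n / k + 1) := by
        rw [ncard_coe_finset, Finset.card_product, Finset.card_univ, Fintype.card_fun,
          Fintype.card_fin, show Fintype.card Ordering = 3 from rfl]

theorem exists_lapCount_le_coverMincard (hg : IsPiecewiseMonotone g C) (hC : C.Finite) {k : ℕ}
    (hk : 0 < k) : ∃ V ∈ 𝓤 α, ∀ n, (lapCount g C n : ℝ≥0∞) ≤
      6 * ((coverMincard g univ V n : ℝ≥0∞) * EReal.exp ((Real.log 3 / k : ℝ) * n)) := by
  obtain ⟨V, hV, hcard⟩ := hg.exists_ncard_precritical_le hC hk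
  refine ⟨V, hV, fun n => ?_⟩
  obtain ⟨s, hs, hmin⟩ := (coverMincard_finite_iff g univ V n).1
    (coverMincard_finite_of_isCompact_uniformContinuous isCompact_univ
      (CompactSpace.uniformContinuous_of_continuous hg.continuous) hV n)
  have hone : 1 ≤ s.card * 3 ^ (n / k + 1) :=
    Nat.mul_pos (Finset.card_pos.2 (hs.nonempty univ_nonempty)) (by positivity)
  have hnat : lapCount g C n ≤ 6 * (s.card * 3 ^ (n / k)) := calc
    lapCount g C n ≤ s.card * 3 ^ (n / k + 1) + s.card * 3 ^ (n / k + 1) :=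
      Nat.add_le_add (hcard n s hs) hone
    _ = 6 * (s.card * 3 ^ (n / k)) := by ring
  have hpow : (3 : ℝ≥0∞) ^ (n / k) ≤ EReal.exp ((Real.log 3 / k : ℝ) * n) := by
    rw [exp_coe_mul_natCast, ← ENNReal.ofReal_ofNat, ← ENNReal.ofReal_pow (by norm_num)]
    exact ENNReal.ofReal_le_ofReal (pow_div_le_exp (by norm_num) n k)
  calc (lapCount g C n : ℝ≥0∞) ≤ 6 * (s.card * 3 ^ (n / k)) := by exact_mod_cast hnat
    _ ≤ _ := by
      rw [← hmin, ENat.toENNReal_coe]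
      gcongr

theorem expGrowthSup_lapCount_le (hg : IsPiecewiseMonotone g C) (hC : C.Finite) {k : ℕ}
    (hk : 0 < k) : expGrowthSup (fun n => (lapCount g C n : ℝ≥0∞)) ≤
      coverEntropy g univ + (Real.log 3 / k : ℝ) := by
  obtain ⟨V, hV, hbound⟩ := hg.exists_lapCount_le_coverMincard hC hk
  calc expGrowthSup (fun n => (lapCount g C n : ℝ≥0∞))
      ≤ expGrowthSup ((fun n => (coverMincard g univ V n : ℝ≥0∞)) *
          fun n : ℕ => EReal.exp ((Real.log 3 / k : ℝ) * n)) :=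
        expGrowthSup_le_of_eventually_le (by simp) (Eventually.of_forall hbound)
    _ ≤ coverEntropyEntourage g univ V + (Real.log 3 / k : ℝ) := by
        refine (expGrowthSup_mul_le ?_ ?_).trans_eq ?_ <;> rw [expGrowthSup_exp]
        · exact .inr (EReal.coe_ne_top _)
        · exact .inr (EReal.coe_ne_bot _)
        · rfl
    _ ≤ coverEntropy g univ + (Real.log 3 / k : ℝ) := by
        gcongr
        exact coverEntropyEntourage_le_coverEntropy g univ hV

theorem coverEntropy_eq_expGrowthSup_lapCount (hg : IsPiecewiseMonotone g C) (hC : C.Finite) :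
    coverEntropy g univ = expGrowthSup (fun n => (lapCount g C n : ℝ≥0∞)) := by
  refine (hg.coverEntropy_le hC).antisymm (EReal.le_of_forall_lt_iff_le.1 fun r hr => ?_)
  obtain ⟨r', hr', hr'r⟩ := EReal.lt_iff_exists_real_btwn.1 hr
  have hlim : Tendsto (fun k : ℕ => r' + Real.log 3 / k) atTop (𝓝 r') := by
    simpa using (tendsto_const_div_atTop_nhds_zero_nat (Real.log 3)).const_add r'
  obtain ⟨k, hkr, hk⟩ := ((hlim.eventually_le_const (EReal.coe_lt_coe_iff.1 hr'r)).and
    (eventually_gt_atTop 0)).exists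
  calc _ ≤ coverEntropy g univ + (Real.log 3 / k : ℝ) := hg.expGrowthSup_lapCount_le hC hk
    _ ≤ (r' : EReal) + (Real.log 3 / k : ℝ) := by gcongr
    _ ≤ r := by exact_mod_cast hkr

end IsPiecewiseMonotone

end Entropy

section RationalSeries

open Polynomial PowerSeries

/-- An integral power series is rational if it is a quotient of two integral polynomials whose
denominator has constant term `1`, hence is invertible as a power series. -/
def IsRationalSeries (f : ℤ⟦X⟧) : Prop :=
  ∃ d p : ℤ[X], d.coeff 0 = 1 ∧ (d : ℤ⟦X⟧) * f = p

theorem IsRationalSeries.sub {f g : ℤ⟦X⟧} (hf : IsRationalSeries f) (hg : IsRationalSeries g) :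
    IsRationalSeries (f - g) := by
  obtain ⟨d, p, hd, hp⟩ := hf
  obtain ⟨e, q, he, hq⟩ := hg
  refine ⟨d * e, e * p - d * q, by simp [mul_coeff_zero, hd, he], ?_⟩
  simp only [Polynomial.coe_mul, Polynomial.coe_sub, ← hp, ← hq]
  ring

theorem exists_common_denominator {ι : Type*} [Finite ι] {f : ι → ℤ⟦X⟧}
    (hf : ∀ i, IsRationalSeries (f i)) :
    ∃ d : ℤ[X], d.coeff 0 = 1 ∧ ∀ i, ∃ p : ℤ[X], (d : ℤ⟦X⟧) * f i = p := by
  have := Fintype.ofFinite ι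
  choose d p hd hp using hf
  refine ⟨∏ i, d i, ?_, fun i => ?_⟩
  · simp [coeff_zero_prod, hd]
  · obtain ⟨e, he⟩ := Finset.dvd_prod_of_mem d (Finset.mem_univ i)
    refine ⟨e * p i, ?_⟩
    rw [he, Polynomial.coe_mul, Polynomial.coe_mul, ← hp]
    ring

theorem isRationalSeries_of_eventually_periodic {a : ℕ → ℤ} {q : ℕ} (hq : 0 < q)
    (ha : ∀ᶠ n in atTop, a (n + q) = a n) : IsRationalSeries (PowerSeries.mk a) := by
  obtain ⟨N, hN⟩ := eventually_atTop.1 ha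
  have hvanish (n : ℕ) (hn : N + q ≤ n) :
      coeff n ((1 - PowerSeries.X ^ q : ℤ⟦X⟧) * PowerSeries.mk a) = 0 := by
    obtain ⟨k, rfl⟩ := Nat.exists_eq_add_of_le hn
    have := hN (N + k) (by lia)
    rw [show N + q + k = N + k + q by ring, sub_mul, one_mul, map_sub, PowerSeries.coeff_X_pow_mul,
      coeff_mk, coeff_mk, this, sub_self]
  refine ⟨1 - Polynomial.X ^ q, trunc (N + q) ((1 - PowerSeries.X ^ q : ℤ⟦X⟧) * PowerSeries.mk a),
    by simp [Polynomial.coeff_X_pow, hq.ne], ?_⟩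
  ext n
  rw [Polynomial.coeff_coe, coeff_trunc]
  split_ifs with h
  · simp
  · simpa using hvanish n (not_lt.1 h)

end RationalSeries

section BoundedSeries

open scoped Polynomial PowerSeries
open Polynomial (aeval)
open PowerSeries (coeff)

theorem polynomial_smul_eq_mul (d : ℤ[X]) (f : ℤ⟦X⟧) : d • f = (d : ℤ⟦X⟧) * f := by
  rw [Algebra.smul_def]
  rfl

theorem monomial_smul_eq (k : ℕ) (c : ℤ) (f : ℤ⟦X⟧) :
    Polynomial.monomial k c • f = PowerSeries.X ^ k * (PowerSeries.C c * f) := by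
  rw [polynomial_smul_eq_mul, ← Polynomial.C_mul_X_pow_eq_monomial, Polynomial.coe_mul,
    Polynomial.coe_C, Polynomial.coe_pow, Polynomial.coe_X]
  ring

/-- The integral power series with bounded coefficients, as a module over the integral
polynomials. -/
def boundedSeries : Submodule ℤ[X] ℤ⟦X⟧ where
  carrier := {f | ∃ B : ℤ, ∀ n, |coeff n f| ≤ B}
  add_mem' := by
    rintro f g ⟨A, hA⟩ ⟨B, hB⟩
    exact ⟨A + B, fun n => by
      rw [map_add]; exact (abs_add_le _ _).trans (add_le_add (hA n) (hB n))⟩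
  zero_mem' := ⟨0, by simp⟩
  smul_mem' := by
    rintro d f ⟨B, hB⟩
    induction d using Polynomial.induction_on' with
    | add d e hd he =>
      obtain ⟨A, hA⟩ := hd
      obtain ⟨B, hB⟩ := he
      exact ⟨A + B, fun n => by
        rw [add_smul, map_add]; exact (abs_add_le _ _).trans (add_le_add (hA n) (hB n))⟩
    | monomial k c =>
      refine ⟨|c| * B, fun n => ?_⟩
      have hB0 : 0 ≤ B := (abs_nonneg _).trans (hB 0)
      rw [monomial_smul_eq, PowerSeries.coeff_X_pow_mul', PowerSeries.coeff_C_mul]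
      split_ifs
      · rw [abs_mul]
        gcongr
        exact hB _
      · rw [abs_zero]
        positivity

theorem mem_boundedSeries {f : ℤ⟦X⟧} : f ∈ boundedSeries ↔ ∃ B : ℤ, ∀ n, |coeff n f| ≤ B :=
  Iff.rfl

theorem hasSum_coeff_smul {f : ℤ⟦X⟧} {t S : ℝ}
    (hf : HasSum (fun n => ((coeff n f : ℤ) : ℝ) * t ^ n) S) (d : ℤ[X]) :
    HasSum (fun n => ((coeff n (d • f) : ℤ) : ℝ) * t ^ n) (aeval t d * S) := by
  induction d using Polynomial.induction_on' with
  | add d e hd he => simpa [add_smul, add_mul] using hd.add he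
  | monomial k c =>
    have hzero (n : ℕ) (hn : n ∉ range (· + k)) :
        ((coeff n (Polynomial.monomial k c • f) : ℤ) : ℝ) * t ^ n = 0 := by
      have hnk : ¬ k ≤ n := fun h => hn ⟨n - k, Nat.sub_add_cancel h⟩
      simp [monomial_smul_eq, PowerSeries.coeff_X_pow_mul', hnk]
    rw [← (add_left_injective k).hasSum_iff hzero, Polynomial.aeval_monomial,
      algebraMap_int_eq, Int.coe_castRingHom]
    refine (hf.mul_left (c * t ^ k)).congr_fun fun n => ?_
    simp only [Function.comp_apply, monomial_smul_eq, PowerSeries.coeff_X_pow_mul,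
      PowerSeries.coeff_C_mul, Int.cast_mul]
    ring

theorem exists_abs_aeval_mul_tsum_le {f : ℤ⟦X⟧} {d : ℤ[X]} (hd : d • f ∈ boundedSeries)
    {t₀ : ℝ} (ht₀ : t₀ < 1) : ∃ B : ℝ, ∀ t ∈ Ico 0 t₀, ∀ S,
      HasSum (fun n => ((coeff n f : ℤ) : ℝ) * t ^ n) S → |aeval t d * S| ≤ B := by
  obtain ⟨B, hB⟩ := mem_boundedSeries.1 hd
  have hB0 : 0 ≤ B := (abs_nonneg _).trans (hB 0)
  refine ⟨B * (1 - t₀)⁻¹, fun t ⟨h0, ht⟩ S hS => ?_⟩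
  have hgeom := (hasSum_geometric_of_lt_one h0 (ht.trans ht₀)).mul_left (B : ℝ)
  calc |aeval t d * S| ≤ B * (1 - t)⁻¹ := by
        refine (hasSum_coeff_smul hS d).norm_le_of_bounded hgeom fun n => ?_
        rw [norm_mul, norm_pow, Real.norm_of_nonneg h0, Real.norm_eq_abs]
        gcongr
        exact_mod_cast hB n
    _ ≤ B * (1 - t₀)⁻¹ := by
        have : 0 < 1 - t₀ := sub_pos.2 ht₀
        gcongr

/-- By continuity the polynomial stays away from `0` near `t₀`, so the partial sums stay bounded
as `t` increases to `t₀`. -/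
theorem summable_of_aeval_ne_zero {γ : ℕ → ℕ} {d : ℤ[X]}
    (hd : d • PowerSeries.mk (fun n => (γ n : ℤ)) ∈ boundedSeries) {t₀ : ℝ} (h0 : 0 < t₀)
    (h1 : t₀ < 1) (hsum : ∀ t ∈ Ico 0 t₀, Summable fun n => (γ n : ℝ) * t ^ n)
    (hne : aeval t₀ d ≠ 0) : Summable fun n => (γ n : ℝ) * t₀ ^ n := by
  obtain ⟨B, hB⟩ := exists_abs_aeval_mul_tsum_le hd h1
  have hpartial (N : ℕ) : |aeval t₀ d| * ∑ n ∈ Finset.range N, (γ n : ℝ) * t₀ ^ n ≤ B := by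
    have hcont : Continuous fun t : ℝ =>
        |aeval t d| * ∑ n ∈ Finset.range N, (γ n : ℝ) * t ^ n := by fun_prop
    refine le_of_tendsto (hcont.continuousWithinAt (s := Iio t₀)) ?_
    filter_upwards [Ico_mem_nhdsLT h0] with t ht
    have hnonneg (n : ℕ) : 0 ≤ (γ n : ℝ) * t ^ n := by have := ht.1; positivity
    calc |aeval t d| * ∑ n ∈ Finset.range N, (γ n : ℝ) * t ^ n
        ≤ |aeval t d| * ∑' n, (γ n : ℝ) * t ^ n := by
          gcongr
          exact (hsum t ht).sum_le_tsum _ fun n _ => hnonneg n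
      _ = |aeval t d * ∑' n, (γ n : ℝ) * t ^ n| := by
          rw [abs_mul, abs_of_nonneg (tsum_nonneg hnonneg)]
      _ ≤ B := hB t ht _ (by simpa using (hsum t ht).hasSum)
  refine summable_of_sum_range_le (c := B / |aeval t₀ d|) (fun n => by positivity) fun N => ?_
  rw [le_div_iff₀' (abs_pos.2 hne)]
  exact hpartial N

/-- The Cauchy product with the geometric series has coefficients
`t ^ n * ∑ k ∈ range (n + 1), γ k`. -/
theorem tendsto_pow_mul_sum_range {γ : ℕ → ℕ} {t : ℝ} (h0 : 0 ≤ t) (h1 : t < 1)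
    (h : Summable fun n => (γ n : ℝ) * t ^ n) :
    Tendsto (fun n => t ^ n * ∑ k ∈ Finset.range (n + 1), (γ k : ℝ)) atTop (𝓝 0) := by
  have hprod := (summable_norm_sum_mul_antidiagonal_of_summable_norm h.norm
    (summable_geometric_of_lt_one h0 h1).norm).of_norm.tendsto_atTop_zero
  refine hprod.congr fun n => ?_
  rw [Finset.Nat.sum_antidiagonal_eq_sum_range_succ (fun i j => (γ i : ℝ) * t ^ i * t ^ j),
    Finset.mul_sum]
  refine Finset.sum_congr rfl fun k hk => ?_
  rw [mul_assoc, ← pow_add, Nat.add_sub_cancel' (Finset.mem_range_succ_iff.1 hk), mul_comm]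

theorem aeval_eq_zero_of_smul_mem_boundedSeries {γ : ℕ → ℕ} {d : ℤ[X]}
    (hd : d • PowerSeries.mk (fun n => (γ n : ℤ)) ∈ boundedSeries) {t₀ : ℝ} (h0 : 0 < t₀)
    (h1 : t₀ < 1) (hsum : ∀ t ∈ Ico 0 t₀, Summable fun n => (γ n : ℝ) * t ^ n) {A : ℝ}
    (hgrow : ∀ n, 1 ≤ t₀ ^ n * (A + ∑ k ∈ Finset.range (n + 1), (γ k : ℝ))) :
    aeval t₀ d = 0 := by
  by_contra hne
  have htend := ((tendsto_pow_atTop_nhds_zero_of_lt_one h0.le h1).mul_const A).add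
    (tendsto_pow_mul_sum_range h0.le h1 (summable_of_aeval_ne_zero hd h0 h1 hsum hne))
  have := ge_of_tendsto' htend fun n => by rw [← mul_add]; exact hgrow n
  norm_num at this

end BoundedSeries

section Cramer

theorem det_smul_mem_of_sum_smul_mem {ι R M : Type*} [Fintype ι] [DecidableEq ι] [CommRing R]
    [AddCommGroup M] [Module R M] (N : Submodule R M) (A : Matrix ι ι R) (x : ι → M)
    (h : ∀ i, ∑ j, A i j • x j ∈ N) (j : ι) : A.det • x j ∈ N := by
  have hcramer : A.det • x j = ∑ i, A.adjugate j i • ∑ k, A i k • x k := by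
    calc A.det • x j = ∑ k, (A.adjugate * A) j k • x k := by
          simp [Matrix.adjugate_mul, Matrix.one_apply, ite_smul]
      _ = ∑ i, A.adjugate j i • ∑ k, A i k • x k := by
          simp only [Matrix.mul_apply, Finset.sum_smul, Finset.smul_sum, mul_smul]
          exact Finset.sum_comm
  rw [hcramer]
  exact N.sum_mem fun i _ => N.smul_mem _ (h i)

open scoped Polynomial PowerSeries

theorem exists_ne_zero_smul_mem_boundedSeries {ι : Type*} [Fintype ι] [DecidableEq ι]
    {ν : ι → ι → ℤ⟦X⟧} (hν : ∀ i j, IsRationalSeries (ν i j))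
    (hone : ∀ i j, PowerSeries.constantCoeff (ν i j) = (1 : Matrix ι ι ℤ) i j) {Γ : ι → ℤ⟦X⟧}
    (hΓ : ∀ i, ∑ j, ν i j * Γ j ∈ boundedSeries) :
    ∃ D : ℤ[X], D ≠ 0 ∧ ∀ j, D • Γ j ∈ boundedSeries := by
  obtain ⟨d, hd, hden⟩ := exists_common_denominator fun ij : ι × ι => hν ij.1 ij.2
  choose A hA using fun i j => hden (i, j)
  have hsum (i : ι) : ∑ j, A i j • Γ j ∈ boundedSeries := by
    convert boundedSeries.smul_mem d (hΓ i) using 1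
    simp only [polynomial_smul_eq_mul, ← hA, Finset.mul_sum, mul_assoc]
  have hcoeff (i j : ι) : (A i j).coeff 0 = (1 : Matrix ι ι ℤ) i j := by
    rw [← hone, ← Polynomial.coeff_coe, ← hA]
    simp [hd]
  have hdet : Polynomial.constantCoeff (Matrix.of A).det = 1 := by
    rw [RingHom.map_det, ← Matrix.det_one (n := ι)]
    congr 1
    ext i j
    exact hcoeff i j
  refine ⟨(Matrix.of A).det, fun h => by simp [h] at hdet, ?_⟩
  exact det_smul_mem_of_sum_smul_mem boundedSeries (Matrix.of A) Γ hsum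

end Cramer

section SidedPoint

/-- A point together with one of its two sides, `1` for the right and `-1` for the left: the
one-sided limits `x⁺` and `x⁻` of kneading theory. -/
@[ext]
structure SidedPoint (α : Type*) where
  point : α
  side : ℤˣ

namespace SidedPoint

variable {α : Type*} [LinearOrder α] {g : α → α} {X : SidedPoint α} {c u v u' v' : α}

/-- The interval `[u, v]` contains the point `X` and a neighbourhood of it on its side. -/
def LiesIn (X : SidedPoint α) (u v : α) : Prop :=
  (X.side = 1 ∧ X.point ∈ Ico u v) ∨ (X.side = -1 ∧ X.point ∈ Ioc u v)

/-- `X > c`, where `c⁻ < c < c⁺`. -/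
def IsRightOf (X : SidedPoint α) (c : α) : Prop :=
  c < X.point ∨ (c = X.point ∧ X.side = 1)

theorem LiesIn.lt (h : X.LiesIn u v) : u < v := by
  rcases h with ⟨-, h⟩ | ⟨-, h⟩
  exacts [h.1.trans_lt h.2, h.1.trans_le h.2]

theorem LiesIn.mem_Icc (h : X.LiesIn u v) : X.point ∈ Icc u v := by
  rcases h with ⟨-, h⟩ | ⟨-, h⟩
  exacts [Ico_subset_Icc_self h, Ioc_subset_Icc_self h]

theorem liesIn_right (huv : u < v) : (⟨u, 1⟩ : SidedPoint α).LiesIn u v :=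
  Or.inl ⟨rfl, left_mem_Ico.2 huv⟩

theorem liesIn_left (huv : u < v) : (⟨v, -1⟩ : SidedPoint α).LiesIn u v :=
  Or.inr ⟨rfl, right_mem_Ioc.2 huv⟩

theorem LiesIn.inter (h : X.LiesIn u v) (h' : X.LiesIn u' v') :
    X.LiesIn (u ⊔ u') (v ⊓ v') := by
  simp only [LiesIn, ← Ico_inter_Ico, ← Ioc_inter_Ioc, mem_inter_iff] at *
  have : (1 : ℤˣ) ≠ -1 := by decide
  aesop

theorem LiesIn.isRightOf_iff (h : X.LiesIn u v) (hc : c ∉ Ioo u v) : X.IsRightOf c ↔ c ≤ u := by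
  have hne : (-1 : ℤˣ) ≠ 1 := by decide
  rcases h with ⟨hσ, hl, hr⟩ | ⟨hσ, hl, hr⟩
  · simp only [IsRightOf, hσ, and_true, ← le_iff_lt_or_eq]
    exact ⟨fun h => not_lt.1 fun hu => hc ⟨hu, h.trans_lt hr⟩, fun h => h.trans hl⟩
  · simp only [IsRightOf, hσ, hne, and_false, or_false]
    exact ⟨fun h => not_lt.1 fun hu => hc ⟨hu, h.trans_le hr⟩, fun h => h.trans_lt hl⟩

open Classical in
/-- The orientation of `g` on the side of `X`; the value `-1` is meaningful only if `g` is strictly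
decreasing there. -/
noncomputable def sign (g : α → α) (X : SidedPoint α) : ℤˣ :=
  if ∃ u v, X.LiesIn u v ∧ StrictMonoOn g (Icc u v) then 1 else -1

/-- The action of `g` on one-sided limits. -/
noncomputable def step (g : α → α) (X : SidedPoint α) : SidedPoint α :=
  ⟨g X.point, X.side * X.sign g⟩

theorem LiesIn.sign_of_strictMonoOn (h : X.LiesIn u v) (hg : StrictMonoOn g (Icc u v)) :
    X.sign g = 1 :=
  if_pos ⟨u, v, h, hg⟩

theorem LiesIn.sign_of_strictAntiOn (h : X.LiesIn u v) (hg : StrictAntiOn g (Icc u v)) :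
    X.sign g = -1 := by
  refine if_neg ?_
  rintro ⟨u', v', h', hg'⟩
  have hlt := (h.inter h').lt
  have hl := left_mem_Icc.2 hlt.le
  have hr := right_mem_Icc.2 hlt.le
  rw [← Icc_inter_Icc] at hl hr
  exact lt_asymm (hg hl.1 hr.1 hlt) (hg' hl.2 hr.2 hlt)

theorem LiesIn.step_of_strictMonoOn (h : X.LiesIn u v) (hg : StrictMonoOn g (Icc u v)) :
    (X.step g).LiesIn (g u) (g v) := by
  have hs := h.sign_of_strictMonoOn hg
  have hu := left_mem_Icc.2 h.lt.le
  have hv := right_mem_Icc.2 h.lt.le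
  have hX := h.mem_Icc
  simp only [LiesIn, step, hs, mul_one]
  refine h.imp (And.imp_right fun hx => ?_) (And.imp_right fun hx => ?_)
  · exact ⟨hg.monotoneOn hu hX hx.1, hg hX hv hx.2⟩
  · exact ⟨hg hu hX hx.1, hg.monotoneOn hX hv hx.2⟩

theorem LiesIn.step_of_strictAntiOn (h : X.LiesIn u v) (hg : StrictAntiOn g (Icc u v)) :
    (X.step g).LiesIn (g v) (g u) := by
  have hs := h.sign_of_strictAntiOn hg
  have hu := left_mem_Icc.2 h.lt.le
  have hv := right_mem_Icc.2 h.lt.le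
  have hX := h.mem_Icc
  rcases h with ⟨hσ, hx⟩ | ⟨hσ, hx⟩
  · refine Or.inr ⟨by simp [step, hσ, hs], ?_⟩
    exact ⟨hg hX hv hx.2, hg.antitoneOn hu hX hx.1⟩
  · refine Or.inl ⟨by simp [step, hσ, hs], ?_⟩
    exact ⟨hg.antitoneOn hX hv hx.2, hg hu hX hx.1⟩

theorem point_step_iterate (g : α → α) (X : SidedPoint α) (n : ℕ) :
    ((step g)^[n] X).point = g^[n] X.point := by
  have h : Function.Semiconj (point (α := α)) (step g) g := fun _ => rfl
  exact h.iterate_right n X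

end SidedPoint

end SidedPoint

section KneadingCoordinate

open scoped PowerSeries
open PowerSeries (coeff)

variable {α : Type*} [LinearOrder α]

open Classical in
/-- The kneading coordinate `θ_c(X) = ∑ₙ εₙ [gⁿ X > c] tⁿ`, where `εₙ` is the orientation of `gⁿ`
at `X`. As `gⁿ` sends the side `σ` of `X` to `σ * εₙ`, that orientation is the product of the sides
of `X` and `gⁿ X`. -/
noncomputable def kneadingCoordinate (g : α → α) (c : α) (X : SidedPoint α) : ℤ⟦X⟧ :=
  PowerSeries.mk fun n =>
    if ((SidedPoint.step g)^[n] X).IsRightOf c then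
      ((X.side * ((SidedPoint.step g)^[n] X).side : ℤˣ) : ℤ) else 0

/-- The kneading increment `θ_c(w⁺) - θ_c(w⁻)`, an entry of the kneading matrix when `c` and `w`
are turning points. -/
noncomputable def kneadingIncrement (g : α → α) (c w : α) : ℤ⟦X⟧ :=
  kneadingCoordinate g c ⟨w, 1⟩ - kneadingCoordinate g c ⟨w, -1⟩

theorem kneadingCoordinate_mem_boundedSeries (g : α → α) (c : α) (X : SidedPoint α) :
    kneadingCoordinate g c X ∈ boundedSeries := by
  refine mem_boundedSeries.2 ⟨1, fun n => ?_⟩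
  rw [kneadingCoordinate, PowerSeries.coeff_mk]
  split_ifs
  · rw [Int.isUnit_iff_abs_eq.1 (Units.isUnit _)]
  · simp

open Classical in
theorem kneadingCoordinate_eq (g : α → α) (c : α) (X : SidedPoint α) :
    kneadingCoordinate g c X = PowerSeries.C (if X.IsRightOf c then 1 else 0) +
      PowerSeries.X * (PowerSeries.C (X.sign g : ℤ) * kneadingCoordinate g c (X.step g)) := by
  ext n
  cases n with
  | zero => simp [kneadingCoordinate]
  | succ n =>
    rw [map_add, PowerSeries.coeff_succ_X_mul, PowerSeries.coeff_C_mul, PowerSeries.coeff_C,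
      if_neg n.succ_ne_zero, zero_add, kneadingCoordinate, kneadingCoordinate,
      PowerSeries.coeff_mk, PowerSeries.coeff_mk, Function.iterate_succ_apply, mul_ite, mul_zero,
      ← Units.val_mul]
    congr 2
    simp only [SidedPoint.step]
    rw [← mul_assoc, mul_left_comm, Int.units_mul_self, mul_one]

theorem constantCoeff_kneadingIncrement (g : α → α) (c w : α) :
    PowerSeries.constantCoeff (kneadingIncrement g c w) = if c = w then 1 else 0 := by
  have hne : (-1 : ℤˣ) ≠ 1 := by decide
  rw [kneadingIncrement, map_sub, kneadingCoordinate_eq g c ⟨w, 1⟩,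
    kneadingCoordinate_eq g c ⟨w, -1⟩]
  simp only [SidedPoint.IsRightOf]
  rcases lt_trichotomy c w with h | h | h
  · simp [h, h.ne]
  · simp [h, hne]
  · simp [h.ne', h.not_gt]

end KneadingCoordinate

section FirstHits

open scoped PowerSeries
open PowerSeries (coeff)

/-- The points of `I` whose orbit meets `C` for the first time at time `n`, and then in `w`
(for `w ∈ C`). -/
def firstHits {X : Type*} (g : X → X) (C : Set X) (w : X) (n : ℕ) (I : Set X) : Set X :=
  {z | z ∈ I ∧ g^[n] z = w ∧ z ∉ precritical g C n}

/-- The generating series of the numbers of first hits of `w` from the interval `I`. -/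
noncomputable def hitSeries {X : Type*} (g : X → X) (C : Set X) (w : X) (I : Set X) : ℤ⟦X⟧ :=
  PowerSeries.mk fun n => ((firstHits g C w n I).ncard : ℤ)

theorem coeff_hitSeries {X : Type*} (g : X → X) (C : Set X) (w : X) (I : Set X) (n : ℕ) :
    coeff n (hitSeries g C w I) = (firstHits g C w n I).ncard :=
  PowerSeries.coeff_mk _ _

theorem firstHits_subset_precritical {X : Type*} {g : X → X} {C : Set X} {w : X} (hw : w ∈ C)
    (n : ℕ) (I : Set X) : firstHits g C w n I ⊆ precritical g C (n + 1) :=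
  fun _ hz => ⟨n, n.lt_succ_self, hz.2.1 ▸ hw⟩

theorem inter_precritical_subset_biUnion_firstHits {X : Type*} (g : X → X) (C : Set X) (n : ℕ)
    (I : Set X) : I ∩ precritical g C n ⊆ ⋃ k < n, ⋃ w ∈ C, firstHits g C w k I := by
  classical
  rintro z ⟨hzI, hz⟩
  have hhit : ∃ j, j < n ∧ g^[j] z ∈ C := hz
  simp only [mem_iUnion]
  refine ⟨Nat.find hhit, (Nat.find_spec hhit).1, _, (Nat.find_spec hhit).2, hzI, rfl, ?_⟩
  rintro ⟨j, hj, hjC⟩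
  exact Nat.find_min hhit hj ⟨hj.trans (Nat.find_spec hhit).1, hjC⟩

theorem firstHits_zero_eq_empty {X : Type*} {g : X → X} {C I : Set X} {w : X} (hw : w ∈ C)
    (h : Disjoint C I) : firstHits g C w 0 I = ∅ := by
  refine eq_empty_of_forall_notMem ?_
  rintro z ⟨hz, rfl, -⟩
  exact disjoint_left.1 h hw hz

theorem ncard_firstHits_singleton {X : Type*} [DecidableEq X] {g : X → X} {C : Set X} {w x : X}
    (hx : x ∈ C) (n : ℕ) : (firstHits g C w n {x}).ncard = if n = 0 ∧ x = w then 1 else 0 := by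
  split_ifs with h
  · obtain ⟨rfl, rfl⟩ := h
    convert ncard_singleton x
    ext z
    simp +contextual [firstHits, precritical_zero]
  · convert ncard_empty X
    refine eq_empty_of_forall_notMem ?_
    rintro z ⟨rfl, hzw, hpre⟩
    have hn : n = 0 := Nat.eq_zero_of_not_pos fun hn => hpre ⟨0, hn, hx⟩
    exact h ⟨hn, by simpa [hn] using hzw⟩

theorem hitSeries_singleton {X : Type*} [DecidableEq X] {g : X → X} {C : Set X} {w x : X}
    (hx : x ∈ C) : hitSeries g C w {x} = PowerSeries.C (if x = w then 1 else 0) := by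
  ext n
  rw [coeff_hitSeries, ncard_firstHits_singleton hx, PowerSeries.coeff_C]
  split_ifs <;> simp_all

variable {α : Type*} [ConditionallyCompleteLinearOrder α] [TopologicalSpace α] [OrderTopology α]
  [DenselyOrdered α] {g : α → α} {C : Set α} {u v w x : α}

namespace IsPiecewiseMonotone

theorem finite_firstHits (hg : IsPiecewiseMonotone g C) (hC : C.Finite) (hw : w ∈ C) (n : ℕ)
    (I : Set α) : (firstHits g C w n I).Finite :=
  (hg.finite_precritical hC (n + 1)).subset (firstHits_subset_precritical hw n I)

theorem ncard_firstHits_le_lapCount (hg : IsPiecewiseMonotone g C) (hC : C.Finite) (hw : w ∈ C)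
    (n : ℕ) (I : Set α) : (firstHits g C w n I).ncard ≤ lapCount g C (n + 1) :=
  (ncard_le_ncard (firstHits_subset_precritical hw n I) (hg.finite_precritical hC (n + 1))).trans
    (Nat.le_succ _)

theorem hitSeries_union (hg : IsPiecewiseMonotone g C) (hC : C.Finite) (hw : w ∈ C) {I J : Set α}
    (h : Disjoint I J) : hitSeries g C w (I ∪ J) = hitSeries g C w I + hitSeries g C w J := by
  ext n
  have hunion : firstHits g C w n (I ∪ J) = firstHits g C w n I ∪ firstHits g C w n J := by
    ext z
    simp only [firstHits, mem_union, mem_ofPred_eq, or_and_right]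
  rw [map_add, coeff_hitSeries, coeff_hitSeries, coeff_hitSeries, hunion, ncard_union_eq
    (h.mono (fun _ hz => hz.1) fun _ hz => hz.1) (hg.finite_firstHits hC hw n I)
    (hg.finite_firstHits hC hw n J), Nat.cast_add]

theorem hitSeries_Ioo_eq_add (hg : IsPiecewiseMonotone g C) (hC : C.Finite) (hw : w ∈ C)
    (hx : x ∈ C) (hux : u < x) (hxv : x < v) :
    hitSeries g C w (Ioo u v) = hitSeries g C w (Ioo u x) + hitSeries g C w (Ioo x v) +
      PowerSeries.C (if x = w then 1 else 0) := by
  rw [← Ioc_union_Ioo_eq_Ioo hux.le hxv, ← Ioo_union_Icc_eq_Ioc hux le_rfl, Icc_self,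
    hg.hitSeries_union hC hw, hg.hitSeries_union hC hw, hitSeries_singleton hx]
  · ring
  · simp
  · rw [← Icc_self, Ioo_union_Icc_eq_Ioc hux le_rfl]
    exact disjoint_left.2 fun z hz hz' => hz.2.not_gt hz'.1

theorem image_firstHits_succ (hg : IsPiecewiseMonotone g C) (huv : u ≤ v)
    (h : Disjoint C (Ioo u v)) (n : ℕ) :
    g '' firstHits g C w (n + 1) (Ioo u v) = firstHits g C w n (uIoo (g u) (g v)) := by
  have hinj := hg.injOn h
  have hcont := hg.continuous.continuousOn (s := Icc u v)
  ext y
  constructor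
  · rintro ⟨z, ⟨hz, hzw, hpre⟩, rfl⟩
    rw [precritical_succ] at hpre
    exact ⟨mapsTo_uIoo_of_injOn huv hcont hinj hz, hzw, fun hy => hpre (Or.inr hy)⟩
  · rintro ⟨hy, hyw, hpre⟩
    obtain ⟨z, hz, rfl⟩ := uIoo_subset_image_Ioo huv hcont hy
    refine ⟨z, ⟨hz, hyw, ?_⟩, rfl⟩
    rw [precritical_succ]
    rintro (hzC | hz')
    exacts [disjoint_left.1 h hzC hz, hpre hz']

theorem hitSeries_eq_X_mul (hg : IsPiecewiseMonotone g C) (hw : w ∈ C) (huv : u ≤ v)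
    (h : Disjoint C (Ioo u v)) :
    hitSeries g C w (Ioo u v) = PowerSeries.X * hitSeries g C w (uIoo (g u) (g v)) := by
  ext n
  cases n with
  | zero => simp [coeff_hitSeries, firstHits_zero_eq_empty hw h]
  | succ n =>
    have hinj := (hg.injOn h).mono fun z (hz : z ∈ firstHits g C w (n + 1) (Ioo u v)) =>
      Ioo_subset_Icc_self hz.1
    rw [PowerSeries.coeff_succ_X_mul, coeff_hitSeries, coeff_hitSeries,
      ← hg.image_firstHits_succ huv h, hinj.ncard_image]

end IsPiecewiseMonotone

end FirstHits

section KneadingIdentity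

open scoped PowerSeries
open PowerSeries (coeff)

theorem induction_on_splitting {α : Type*} [LinearOrder α] {C : Set α} (hC : C.Finite)
    {P : α → α → Prop} (hfree : ∀ u v, u < v → Disjoint C (Ioo u v) → P u v)
    (hsplit : ∀ u x v, x ∈ C → u < x → x < v → P u x → P x v → P u v) {u v : α} (huv : u < v) :
    P u v := by
  induction hn : (C ∩ Ioo u v).ncard using Nat.strong_induction_on generalizing u v with
  | _ n ih =>
    subst hn
    by_cases h : Disjoint C (Ioo u v)
    · exact hfree u v huv h
    obtain ⟨x, hx, hux, hxv⟩ := not_disjoint_iff.1 h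
    have hlt {u' v' : α} (hsub : Ioo u' v' ⊆ Ioo u v) (hx' : x ∉ Ioo u' v') :
        (C ∩ Ioo u' v').ncard < (C ∩ Ioo u v).ncard :=
      ncard_lt_ncard ((ssubset_iff_of_subset (inter_subset_inter_right C hsub)).2
        ⟨x, ⟨hx, hux, hxv⟩, fun hmem => hx' hmem.2⟩) (hC.inter_of_left _)
    exact hsplit u x v hx hux hxv
      (ih _ (hlt (Ioo_subset_Ioo_right hxv.le) right_notMem_Ioo) hux rfl)
      (ih _ (hlt (Ioo_subset_Ioo_left hux.le) left_notMem_Ioo) hxv rfl)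

variable {α : Type*} [ConditionallyCompleteLinearOrder α] [TopologicalSpace α] [OrderTopology α]
  [DenselyOrdered α] {g : α → α} {C : Finset α} {c u v x : α}

/-- The difference of the two sides of the Milnor–Thurston kneading identity
`θ_c(v⁻) - θ_c(u⁺) = ∑ w, ν_{cw} Γ_w` on `(u, v)`, where `ν` is the kneading matrix and `Γ_w` the
generating series of the first hits of `w`. -/
noncomputable def kneadingDefect {α : Type*} [LinearOrder α] (g : α → α) (C : Finset α)
    (c u v : α) : ℤ⟦X⟧ :=
  kneadingCoordinate g c ⟨v, -1⟩ - kneadingCoordinate g c ⟨u, 1⟩ -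
    ∑ w ∈ C, kneadingIncrement g c w * hitSeries g C w (Ioo u v)

namespace IsPiecewiseMonotone

theorem kneadingDefect_eq_add (hg : IsPiecewiseMonotone g C) (hx : x ∈ C) (hux : u < x)
    (hxv : x < v) :
    kneadingDefect g C c u v = kneadingDefect g C c u x + kneadingDefect g C c x v := by
  have hsum : ∑ w ∈ C, kneadingIncrement g c w * hitSeries g C w (Ioo u v) =
      ∑ w ∈ C, kneadingIncrement g c w * hitSeries g C w (Ioo u x) +
        ∑ w ∈ C, kneadingIncrement g c w * hitSeries g C w (Ioo x v) + kneadingIncrement g c x := by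
    have hx_sum : kneadingIncrement g c x =
        ∑ w ∈ C, kneadingIncrement g c w * PowerSeries.C (if x = w then 1 else 0) := by
      simp [apply_ite, hx]
    rw [hx_sum, ← Finset.sum_add_distrib, ← Finset.sum_add_distrib]
    refine Finset.sum_congr rfl fun w hw => ?_
    rw [hg.hitSeries_Ioo_eq_add C.finite_toSet hw hx hux hxv, mul_add, mul_add]
  rw [kneadingDefect, hsum, kneadingDefect, kneadingDefect, kneadingIncrement]
  ring

theorem kneadingCoordinate_sub_of_disjoint (hg : IsPiecewiseMonotone g C) (hc : c ∈ C)
    (huv : u < v) (h : Disjoint (C : Set α) (Ioo u v)) :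
    kneadingCoordinate g c ⟨v, -1⟩ - kneadingCoordinate g c ⟨u, 1⟩ =
      PowerSeries.X * (kneadingCoordinate g c ⟨g u ⊔ g v, -1⟩ -
        kneadingCoordinate g c ⟨g u ⊓ g v, 1⟩) := by
  classical
  have hl := SidedPoint.liesIn_left huv
  have hr := SidedPoint.liesIn_right huv
  have hcI : c ∉ Ioo u v := disjoint_left.1 h hc
  rw [kneadingCoordinate_eq g c ⟨v, -1⟩, kneadingCoordinate_eq g c ⟨u, 1⟩]
  simp only [hl.isRightOf_iff hcI, hr.isRightOf_iff hcI, SidedPoint.step]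
  rcases hg.strictMonoOn_or_strictAntiOn huv.le h with hmono | hanti
  · have hlt := hmono (left_mem_Icc.2 huv.le) (right_mem_Icc.2 huv.le) huv
    rw [sup_of_le_right hlt.le, inf_of_le_left hlt.le, hl.sign_of_strictMonoOn hmono,
      hr.sign_of_strictMonoOn hmono]
    simp [mul_sub]
  · have hlt := hanti (left_mem_Icc.2 huv.le) (right_mem_Icc.2 huv.le) huv
    rw [sup_of_le_left hlt.le, inf_of_le_right hlt.le, hl.sign_of_strictAntiOn hanti,
      hr.sign_of_strictAntiOn hanti]
    simp [mul_sub, neg_add_eq_sub]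

theorem kneadingDefect_of_disjoint (hg : IsPiecewiseMonotone g C) (hc : c ∈ C)
    (huv : u < v) (h : Disjoint (C : Set α) (Ioo u v)) :
    kneadingDefect g C c u v = PowerSeries.X * kneadingDefect g C c (g u ⊓ g v) (g u ⊔ g v) := by
  rw [kneadingDefect, hg.kneadingCoordinate_sub_of_disjoint hc huv h, kneadingDefect,
    mul_sub, mul_sub, mul_sub, Finset.mul_sum]
  congr 1
  refine Finset.sum_congr rfl fun w hw => ?_
  rw [hg.hitSeries_eq_X_mul hw huv.le h, uIoo, mul_left_comm]

theorem coeff_kneadingDefect_eq_zero (hg : IsPiecewiseMonotone g C) {n : ℕ}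
    (hfree : ∀ u v, u < v → Disjoint (C : Set α) (Ioo u v) → coeff n (kneadingDefect g C c u v) = 0)
    (huv : u < v) : coeff n (kneadingDefect g C c u v) = 0 := by
  refine induction_on_splitting (P := fun u v => coeff n (kneadingDefect g C c u v) = 0)
    C.finite_toSet hfree (fun u x v hx hux hxv h₁ h₂ => ?_) huv
  rw [hg.kneadingDefect_eq_add hx hux hxv, map_add, h₁, h₂, add_zero]

/-- Both sides are additive under splitting the interval at turning points, and each application
of `g` to an interval without turning points gains a factor `t`. -/
theorem kneadingDefect_eq_zero (hg : IsPiecewiseMonotone g C) (hc : c ∈ C) (huv : u < v) :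
    kneadingDefect g C c u v = 0 := by
  ext n
  rw [map_zero]
  induction n generalizing u v with
  | zero =>
    refine hg.coeff_kneadingDefect_eq_zero (fun u v huv h => ?_) huv
    rw [hg.kneadingDefect_of_disjoint hc huv h, PowerSeries.coeff_zero_X_mul]
  | succ n ih =>
    refine hg.coeff_kneadingDefect_eq_zero (fun u v huv h => ?_) huv
    have hne := (hg.injOn h).ne (left_mem_Icc.2 huv.le) (right_mem_Icc.2 huv.le) huv.ne
    rw [hg.kneadingDefect_of_disjoint hc huv h, PowerSeries.coeff_succ_X_mul]
    exact ih (inf_lt_sup.2 hne)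

theorem sum_kneadingIncrement_mul_hitSeries (hg : IsPiecewiseMonotone g C) (hc : c ∈ C)
    (huv : u < v) : ∑ w ∈ C, kneadingIncrement g c w * hitSeries g C w (Ioo u v) =
      kneadingCoordinate g c ⟨v, -1⟩ - kneadingCoordinate g c ⟨u, 1⟩ :=
  (sub_eq_zero.1 (hg.kneadingDefect_eq_zero hc huv)).symm

end IsPiecewiseMonotone

end KneadingIdentity

section Periodicity

theorem exists_eventually_periodic_of_finite_range {β : Type*} {P : ℕ → β} {T : β → β}
    (hstep : ∀ᶠ n in atTop, P (n + 1) = T (P n)) (hfin : (range P).Finite) :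
    ∃ q, 0 < q ∧ ∀ᶠ n in atTop, P (n + q) = P n := by
  obtain ⟨N, hN⟩ := eventually_atTop.1 hstep
  obtain ⟨i, j, hij, heq⟩ :=
    hfin.exists_lt_map_eq_of_forall_mem (f := fun n => P (N + n)) fun n => mem_range_self (N + n)
  refine ⟨j - i, Nat.sub_pos_of_lt hij, eventually_atTop.2 ⟨N + i, fun n hn => ?_⟩⟩
  induction n, hn using Nat.le_induction with
  | base =>
    rw [show N + i + (j - i) = N + j by omega]
    exact heq.symm
  | succ n hn ih => rw [Nat.add_right_comm, hN _ (by omega), hN _ (by omega), ih]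

theorem finite_range_iterate {X : Type*} {g : X → X} {m : ℕ} {p : X} (hm : 0 < m)
    (hp : Function.IsPeriodicPt g m p) : (range fun n => g^[n] p).Finite := by
  refine ((finite_Iio m).image fun n => g^[n] p).subset ?_
  rintro _ ⟨n, rfl⟩
  exact ⟨n % m, Nat.mod_lt n hm, hp.iterate_mod_apply n⟩

/-- The point `x` is attracted to a periodic orbit of `g`. -/
def IsAttractedToPeriodicOrbit {X : Type*} [TopologicalSpace X] (g : X → X) (x : X) : Prop :=
  ∃ m, 0 < m ∧ ∃ p, Function.IsPeriodicPt g m p ∧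
    Tendsto (fun n => g^[m * n] x) atTop (𝓝 p)

theorem eventually_iterate_of_tendsto {X : Type*} [TopologicalSpace X] {g : X → X}
    (hg : Continuous g) {m : ℕ} {p x : X} (hm : 0 < m) (hp : Function.IsPeriodicPt g m p)
    (hx : Tendsto (fun n => g^[m * n] x) atTop (𝓝 p)) {R : X → X → Prop}
    (hR : ∀ y, ∀ᶠ z in 𝓝 y, R z y) : ∀ᶠ n in atTop, R (g^[n] x) (g^[n] p) := by
  refine Filter.Eventually.atTop_of_arithmetic hm.ne' fun r _ => ?_
  have hr : Tendsto (fun n => g^[r] (g^[m * n] x)) atTop (𝓝 (g^[r] p)) :=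
    ((hg.iterate r).tendsto p).comp hx
  filter_upwards [hr.eventually (hR _)] with n hn
  rwa [add_comm, Function.iterate_add_apply, Function.iterate_add_apply,
    (hp.mul_const n).eq]

end Periodicity

section Shadowing

theorem eventually_disjoint_uIcc {α : Type*} [LinearOrder α] [TopologicalSpace α]
    [OrderTopology α] {C : Set α} (hC : C.Finite) (y : α) :
    ∀ᶠ x in 𝓝 y, Disjoint (C \ {y}) (uIcc x y) := by
  have hmem : (C \ {y})ᶜ ∈ 𝓝 y :=
    (hC.subset sdiff_subset).isClosed.isOpen_compl.mem_nhds fun h => h.2 rfl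
  have htends : Tendsto (fun x => uIcc x y) (𝓝 y) (𝓝 y).smallSets :=
    tendsto_id.uIcc tendsto_const_nhds
  exact (htends.eventually (eventually_smallSets_subset.2 hmem)).mono fun _ =>
    subset_compl_iff_disjoint_left.1

namespace SidedPoint

variable {α : Type*} [LinearOrder α] {g : α → α} {C : Set α} {X : SidedPoint α} {u v x y : α}

theorem LiesIn.exists_disjoint (h : X.LiesIn u v) (hC : C.Finite) :
    ∃ u v, Disjoint C (Ioo u v) ∧ X.LiesIn u v := by
  refine induction_on_splitting hC
    (P := fun u v => X.LiesIn u v → ∃ u v, Disjoint C (Ioo u v) ∧ X.LiesIn u v)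
    (fun u v _ hdisj h => ⟨u, v, hdisj, h⟩) (fun u x v _ _ _ hleft hright h => ?_) h.lt h
  rcases h with ⟨hσ, h⟩ | ⟨hσ, h⟩
  · rcases lt_or_ge X.point x with hx | hx
    exacts [hleft (Or.inl ⟨hσ, h.1, hx⟩), hright (Or.inl ⟨hσ, hx, h.2⟩)]
  · rcases le_or_gt X.point x with hx | hx
    exacts [hleft (Or.inr ⟨hσ, h.1, hx⟩), hright (Or.inr ⟨hσ, hx, h.2⟩)]

/-- The side of `y` on which `X` lies. If `X` runs through an orbit which approaches the orbit of
`y`, then its shadow eventually has the same itinerary, but takes only finitely many values when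
`y` is periodic. -/
def shadow (y : α) (X : SidedPoint α) : SidedPoint α :=
  ⟨y, if y < X.point then 1 else if X.point < y then -1 else X.side⟩

theorem exists_liesIn_shadow (hX : X.LiesIn u v) (hC : C.Finite)
    (hy : Disjoint (C \ {y}) (uIcc X.point y)) :
    ∃ u v, Disjoint C (Ioo u v) ∧ X.LiesIn u v ∧ (shadow y X).LiesIn u v := by
  obtain ⟨u, v, hdisj, h⟩ := hX.exists_disjoint hC
  have hdisj' {z : α} (hz : z ∈ uIcc X.point y) (hne : z ≠ y) : z ∉ C :=
    fun hzC => disjoint_left.1 hy ⟨hzC, hne⟩ hz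
  obtain ⟨hu, hv⟩ := h.mem_Icc
  rcases lt_trichotomy y X.point with hyX | rfl | hyX
  · have hyv := hyX.trans_le hv
    refine ⟨y, v, disjoint_right.2 fun z hz => ?_, ?_, ?_⟩
    · rcases le_or_gt z X.point with hzX | hzX
      · exact hdisj' (mem_uIcc_of_ge hz.1.le hzX) hz.1.ne'
      · exact disjoint_right.1 hdisj ⟨hu.trans_lt hzX, hz.2⟩
    · exact h.imp (And.imp_right fun h => ⟨hyX.le, h.2⟩) (And.imp_right fun h => ⟨hyX, h.2⟩)
    · rw [shadow, if_pos hyX]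
      exact liesIn_right hyv
  · refine ⟨u, v, hdisj, h, ?_⟩
    simpa only [shadow, lt_irrefl, if_false] using h
  · have huy := hu.trans_lt hyX
    refine ⟨u, y, disjoint_right.2 fun z hz => ?_, ?_, ?_⟩
    · rcases le_or_gt X.point z with hzX | hzX
      · exact hdisj' (mem_uIcc_of_le hzX hz.2.le) hz.2.ne
      · exact disjoint_right.1 hdisj ⟨hz.1, hzX.trans_le hv⟩
    · exact h.imp (And.imp_right fun h => ⟨h.1, hyX⟩) (And.imp_right fun h => ⟨h.1, hyX.le⟩)
    · rw [shadow, if_neg hyX.not_gt, if_pos hyX]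
      exact liesIn_left huy

theorem isRightOf_shadow_iff (hX : X.LiesIn u v) (hC : C.Finite)
    (hy : Disjoint (C \ {y}) (uIcc X.point y)) {c : α} (hc : c ∈ C) :
    (shadow y X).IsRightOf c ↔ X.IsRightOf c := by
  obtain ⟨u, v, hdisj, h, h'⟩ := exists_liesIn_shadow hX hC hy
  have hcuv := disjoint_left.1 hdisj hc
  rw [h.isRightOf_iff hcuv, h'.isRightOf_iff hcuv]

end SidedPoint

namespace IsPiecewiseMonotone

open SidedPoint

variable {α : Type*} [ConditionallyCompleteLinearOrder α] [TopologicalSpace α] [OrderTopology α]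
  [DenselyOrdered α] {g : α → α} {C : Set α} {X : SidedPoint α} {u v x y : α}

theorem exists_liesIn_step (hg : IsPiecewiseMonotone g C) (hC : C.Finite)
    (h : ∃ u v, X.LiesIn u v) : ∃ u v, (X.step g).LiesIn u v := by
  obtain ⟨u, v, h⟩ := h
  obtain ⟨u, v, hdisj, h⟩ := h.exists_disjoint hC
  rcases hg.strictMonoOn_or_strictAntiOn h.lt.le hdisj with hmono | hanti
  exacts [⟨_, _, h.step_of_strictMonoOn hmono⟩, ⟨_, _, h.step_of_strictAntiOn hanti⟩]

theorem exists_liesIn_step_iterate (hg : IsPiecewiseMonotone g C) (hC : C.Finite)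
    (h : ∃ u v, X.LiesIn u v) (n : ℕ) : ∃ u v, ((step g)^[n] X).LiesIn u v := by
  induction n with
  | zero => exact h
  | succ n ih =>
    rw [Function.iterate_succ_apply']
    exact hg.exists_liesIn_step hC ih

theorem sign_step_shadow (hg : IsPiecewiseMonotone g C) (hC : C.Finite) (hX : X.LiesIn u v)
    (hy : Disjoint (C \ {y}) (uIcc X.point y)) :
    (shadow y X).sign g = X.sign g ∧ (shadow y X).step g = shadow (g y) (X.step g) := by
  obtain ⟨u, v, hdisj, h, h'⟩ := exists_liesIn_shadow hX hC hy
  have hx := h.mem_Icc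
  have hyI : y ∈ Icc u v := h'.mem_Icc
  rcases hg.strictMonoOn_or_strictAntiOn h.lt.le hdisj with hmono | hanti
  · have hs := h.sign_of_strictMonoOn hmono
    have hs' := h'.sign_of_strictMonoOn hmono
    refine ⟨hs'.trans hs.symm, SidedPoint.ext rfl ?_⟩
    simp only [step, hs, hs']
    simp only [shadow, mul_one, hmono.lt_iff_lt hyI hx, hmono.lt_iff_lt hx hyI]
  · have hs := h.sign_of_strictAntiOn hanti
    have hs' := h'.sign_of_strictAntiOn hanti
    refine ⟨hs'.trans hs.symm, SidedPoint.ext rfl ?_⟩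
    simp only [step, hs, hs']
    simp only [shadow, mul_neg, mul_one, hanti.lt_iff_gt hyI hx, hanti.lt_iff_gt hx hyI]
    rcases lt_trichotomy y X.point with hlt | rfl | hlt
    · simp [hlt, hlt.not_gt]
    · simp
    · simp [hlt, hlt.not_gt]

theorem eventually_periodic_step (hg : IsPiecewiseMonotone g C) (hC : C.Finite)
    (hX : ∃ u v, X.LiesIn u v) (hatt : IsAttractedToPeriodicOrbit g X.point) :
    ∃ q, 0 < q ∧ ∀ᶠ n in atTop, ((step g)^[n + q] X).side = ((step g)^[n] X).side ∧
      ∀ c ∈ C, ((step g)^[n + q] X).IsRightOf c ↔ ((step g)^[n] X).IsRightOf c := by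
  obtain ⟨m, hm, p, hp, htends⟩ := hatt
  set Y : ℕ → SidedPoint α := fun n => (step g)^[n] X with hY
  have hlies := hg.exists_liesIn_step_iterate hC hX
  have hnear : ∀ᶠ n in atTop, Disjoint (C \ {g^[n] p}) (uIcc (Y n).point (g^[n] p)) := by
    simp only [hY, point_step_iterate]
    exact eventually_iterate_of_tendsto hg.continuous hm hp htends
      (eventually_disjoint_uIcc hC)
  set P : ℕ → SidedPoint α := fun n => shadow (g^[n] p) (Y n) with hP
  have hstep : ∀ᶠ n in atTop, (P (n + 1), (Y (n + 1)).side) =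
      ((P n).step g, (Y n).side * (P n).sign g) := by
    filter_upwards [hnear] with n hn
    obtain ⟨u, v, h⟩ := hlies n
    obtain ⟨hsign, hshadow⟩ := hg.sign_step_shadow hC h hn
    simp only [hP, hY, Function.iterate_succ_apply'] at hsign hshadow ⊢
    rw [hshadow, hsign, step]
  have hfin : (range fun n => (P n, (Y n).side)).Finite := by
    refine ((finite_range_iterate hm hp).prod (finite_univ (α := ℤˣ × ℤˣ))).image
      (fun z => ((⟨z.1, z.2.1⟩ : SidedPoint α), z.2.2)) |>.subset ?_
    rintro _ ⟨n, rfl⟩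
    exact ⟨(g^[n] p, (P n).side, (Y n).side), ⟨mem_range_self n, mem_univ _⟩, rfl⟩
  obtain ⟨q, hq, hper⟩ := exists_eventually_periodic_of_finite_range
    (T := fun z : SidedPoint α × ℤˣ => (z.1.step g, z.2 * z.1.sign g)) hstep hfin
  refine ⟨q, hq, ?_⟩
  filter_upwards [hper, hnear, (tendsto_add_atTop_nat q).eventually hnear] with n hn hnear hnear'
  obtain ⟨hPn, hside⟩ := Prod.mk.inj hn
  obtain ⟨_, _, h⟩ := hlies n
  obtain ⟨_, _, h'⟩ := hlies (n + q)
  refine ⟨hside, fun c hc => ?_⟩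
  rw [← isRightOf_shadow_iff h hC hnear hc, ← isRightOf_shadow_iff h' hC hnear' hc]
  exact iff_of_eq (congrArg (IsRightOf · c) hPn)

theorem isRationalSeries_kneadingCoordinate (hg : IsPiecewiseMonotone g C) (hC : C.Finite)
    (hX : ∃ u v, X.LiesIn u v) (hatt : IsAttractedToPeriodicOrbit g X.point) {c : α}
    (hc : c ∈ C) : IsRationalSeries (kneadingCoordinate g c X) := by
  obtain ⟨q, hq, hper⟩ := hg.eventually_periodic_step hC hX hatt
  refine isRationalSeries_of_eventually_periodic hq (hper.mono fun n hn => ?_)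
  rw [hn.1, propext (hn.2 c hc)]

theorem isRationalSeries_kneadingIncrement (hg : IsPiecewiseMonotone g C) (hC : C.Finite)
    {c w : α} (hc : c ∈ C) (huw : u < w) (hwv : w < v) (hatt : IsAttractedToPeriodicOrbit g w) :
    IsRationalSeries (kneadingIncrement g c w) :=
  (hg.isRationalSeries_kneadingCoordinate hC ⟨w, v, SidedPoint.liesIn_right hwv⟩ hatt hc).sub
    (hg.isRationalSeries_kneadingCoordinate hC ⟨u, w, SidedPoint.liesIn_left huw⟩ hatt hc)

end IsPiecewiseMonotone

end Shadowing

section Algebraicity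

open scoped Polynomial PowerSeries
open Polynomial (aeval)

theorem summable_mul_pow_of_eventually_le_exp {γ : ℕ → ℕ} {s A : ℝ}
    (h : ∀ r > s, ∀ᶠ n : ℕ in atTop, (γ n : ℝ) ≤ A * Real.exp (r * n)) {t : ℝ}
    (ht : t ∈ Ico 0 (Real.exp (-s))) : Summable fun n => (γ n : ℝ) * t ^ n := by
  obtain ⟨x, htx, hxs⟩ := exists_between ht.2
  have hx : 0 < x := ht.1.trans_lt htx
  have hr : s < -Real.log x := by
    rwa [lt_neg, Real.log_lt_iff_lt_exp hx]
  have hgeom : Summable fun n : ℕ => A * (t / x) ^ n :=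
    (summable_geometric_of_lt_one (div_nonneg ht.1 hx.le) ((div_lt_one hx).2 htx)).mul_left A
  refine hgeom.of_norm_bounded_eventually_nat ?_
  filter_upwards [h _ hr] with n hn
  rw [Real.norm_of_nonneg (mul_nonneg (γ n).cast_nonneg (pow_nonneg ht.1 n))]
  calc (γ n : ℝ) * t ^ n ≤ A * Real.exp (-Real.log x * n) * t ^ n := by
        gcongr
        exact pow_nonneg ht.1 n
    _ = A * (t / x) ^ n := by
        rw [mul_comm _ (n : ℝ), Real.exp_nat_mul, Real.exp_neg, Real.exp_log hx, mul_assoc,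
          ← mul_pow, inv_mul_eq_div]

theorem isAlgebraic_exp_of_smul_mem_boundedSeries {γ : ℕ → ℕ} {d : ℤ[X]} (hd : d ≠ 0)
    (hdγ : d • PowerSeries.mk (fun n => (γ n : ℤ)) ∈ boundedSeries) {s A B : ℝ} (hs : 0 ≤ s)
    (hlower : ∀ n : ℕ, Real.exp (s * n) ≤ A + ∑ k ∈ Finset.range (n + 1), (γ k : ℝ))
    (hupper : ∀ r > s, ∀ᶠ n : ℕ in atTop, (γ n : ℝ) ≤ B * Real.exp (r * n)) :
    IsAlgebraic ℚ (Real.exp s) := by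
  rcases hs.eq_or_lt with rfl | hs
  · rw [Real.exp_zero]
    exact isAlgebraic_one
  have hgrow (n : ℕ) :
      1 ≤ Real.exp (-s) ^ n * (A + ∑ k ∈ Finset.range (n + 1), (γ k : ℝ)) := by
    rw [← Real.exp_nat_mul, mul_neg, Real.exp_neg, inv_mul_eq_div, one_le_div (Real.exp_pos _),
      mul_comm]
    exact hlower n
  have hroot : aeval (Real.exp (-s)) d = 0 :=
    aeval_eq_zero_of_smul_mem_boundedSeries hdγ (Real.exp_pos _)
      (Real.exp_lt_one_iff.2 (neg_neg_of_pos hs))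
      (fun t ht => summable_mul_pow_of_eventually_le_exp hupper ht) hgrow
  have halg : IsAlgebraic ℤ (Real.exp (-s)) := ⟨d, hd, hroot⟩
  rw [← neg_neg s, Real.exp_neg]
  exact (halg.extendScalars Int.cast_injective).inv

end Algebraicity

namespace IsPiecewiseMonotone

open scoped Polynomial PowerSeries ENNReal
open Dynamics ExpGrowth

theorem exists_smul_hitSeries_mem_boundedSeries {α : Type*} [ConditionallyCompleteLinearOrder α]
    [TopologicalSpace α] [OrderTopology α] [DenselyOrdered α] {g : α → α} {C : Finset α} {u v : α}
    (hg : IsPiecewiseMonotone g C) (hC : ↑C ⊆ Ioo u v)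
    (hatt : ∀ w ∈ C, IsAttractedToPeriodicOrbit g w) :
    ∃ d : ℤ[X], d ≠ 0 ∧ ∀ w ∈ C, d • hitSeries g C w (Ioo u v) ∈ boundedSeries := by
  obtain ⟨d, hd, hmem⟩ := exists_ne_zero_smul_mem_boundedSeries
    (ν := fun c w : C => kneadingIncrement g (c : α) w)
    (Γ := fun w : C => hitSeries g C (w : α) (Ioo u v))
    (fun c w => hg.isRationalSeries_kneadingIncrement C.finite_toSet c.2 (hC w.2).1 (hC w.2).2
      (hatt w w.2))
    (fun c w => by simp only [constantCoeff_kneadingIncrement, Matrix.one_apply, Subtype.ext_iff])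
    (fun c => by
      rw [Finset.sum_coe_sort C fun w => kneadingIncrement g (c : α) w * hitSeries g C w (Ioo u v),
        hg.sum_kneadingIncrement_mul_hitSeries c.2 ((hC c.2).1.trans (hC c.2).2)]
      exact boundedSeries.sub_mem (kneadingCoordinate_mem_boundedSeries g c _)
        (kneadingCoordinate_mem_boundedSeries g c _))
  exact ⟨d, hd, fun w hw => hmem ⟨w, hw⟩⟩

variable {α : Type*} [CompleteLinearOrder α] {g : α → α} {C : Finset α}

theorem lapCount_le_add_sum_ncard_firstHits [TopologicalSpace α] [OrderTopology α]
    [DenselyOrdered α] (hg : IsPiecewiseMonotone g C) (n : ℕ) :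
    lapCount g C n ≤
      3 + ∑ k ∈ Finset.range n, ∑ w ∈ C, (firstHits g C w k (Ioo ⊥ ⊤)).ncard := by
  set H : Set α := ⋃ k ∈ Finset.range n, ⋃ w ∈ C, firstHits g C w k (Ioo ⊥ ⊤)
  have hcover : precritical g C n ⊆ insert ⊥ (insert ⊤ H) := fun z hz => by
    by_cases hzI : z ∈ Ioo ⊥ ⊤
    · refine Or.inr (Or.inr (?_ : z ∈ H))
      simpa only [H, Finset.mem_range, Finset.mem_coe] using
        inter_precritical_subset_biUnion_firstHits g C n _ ⟨hzI, hz⟩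
    · rw [mem_Ioo, bot_lt_iff_ne_bot, lt_top_iff_ne_top, not_and_not_right] at hzI
      exact or_iff_not_imp_left.2 fun h => Or.inl (hzI h)
  have hH : H.ncard ≤ ∑ k ∈ Finset.range n, ∑ w ∈ C, (firstHits g C w k (Ioo ⊥ ⊤)).ncard :=
    (Finset.set_ncard_biUnion_le _ _).trans
      (Finset.sum_le_sum fun k _ => Finset.set_ncard_biUnion_le _ _)
  have hHfin : H.Finite := (Finset.range n).finite_toSet.biUnion fun k _ =>
    C.finite_toSet.biUnion fun w hw => hg.finite_firstHits C.finite_toSet hw k _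
  calc lapCount g C n ≤ (insert ⊥ (insert ⊤ H)).ncard + 1 :=
        Nat.add_le_add_right (ncard_le_ncard hcover ((hHfin.insert ⊤).insert ⊥)) 1
    _ ≤ H.ncard + 1 + 1 + 1 := by
        gcongr
        exact (ncard_insert_le _ _).trans (Nat.add_le_add_right (ncard_insert_le _ _) 1)
    _ ≤ _ := by omega

theorem sum_ncard_firstHits_le [TopologicalSpace α] [OrderTopology α] [DenselyOrdered α]
    (hg : IsPiecewiseMonotone g C) (n : ℕ) (I : Set α) :
    ∑ w ∈ C, (firstHits g C w n I).ncard ≤ C.card * lapCount g C 1 * lapCount g C n := by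
  refine (Finset.sum_le_card_nsmul C _ (lapCount g C 1 * lapCount g C n) fun w hw => ?_).trans_eq
    (by rw [smul_eq_mul, mul_assoc])
  rw [mul_comm]
  exact (hg.ncard_firstHits_le_lapCount C.finite_toSet hw n I).trans
    (hg.lapCount_add_le C.finite_toSet n 1)

theorem exists_coverEntropy_eq_and_isAlgebraic [UniformSpace α] [OrderTopology α]
    [DenselyOrdered α] (hg : IsPiecewiseMonotone g C) (hC : ↑C ⊆ Ioo (⊥ : α) ⊤)
    (hatt : ∀ w ∈ C, IsAttractedToPeriodicOrbit g w) :
    ∃ h : ℝ, 0 ≤ h ∧ coverEntropy g univ = h ∧ IsAlgebraic ℚ (Real.exp h) := by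
  have hCfin := C.finite_toSet
  obtain ⟨s, hs, hlower, hupper⟩ := exists_growthRate_of_submultiplicative
    (u := lapCount g C) (fun n => Nat.le_add_left 1 _) (hg.lapCount_add_le hCfin)
  refine ⟨s, hs, ?_, ?_⟩
  · rw [hg.coverEntropy_eq_expGrowthSup_lapCount hCfin, expGrowthSup_natCast_eq hlower hupper]
  obtain ⟨d, hd, hmem⟩ := hg.exists_smul_hitSeries_mem_boundedSeries hC hatt
  refine isAlgebraic_exp_of_smul_mem_boundedSeries hd
    (γ := fun n => ∑ w ∈ C, (firstHits g C w n (Ioo ⊥ ⊤)).ncard) (A := 3)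
    (B := C.card * lapCount g C 1) ?_ hs (fun n => ?_) (fun r hr => ?_)
  · convert boundedSeries.sum_mem hmem using 1
    rw [← Finset.smul_sum]
    congr 1
    ext n
    simp only [PowerSeries.coeff_mk, map_sum, coeff_hitSeries, Nat.cast_sum]
  · calc Real.exp (s * n) ≤ lapCount g C n := hlower n
      _ ≤ lapCount g C (n + 1) := by exact_mod_cast hg.lapCount_mono hCfin n.le_succ
      _ ≤ _ := by exact_mod_cast hg.lapCount_le_add_sum_ncard_firstHits (n + 1)
  · filter_upwards [hupper r hr] with n hn
    calc ((∑ w ∈ C, (firstHits g C w n (Ioo ⊥ ⊤)).ncard : ℕ) : ℝ)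
        ≤ C.card * lapCount g C 1 * lapCount g C n := by
          exact_mod_cast hg.sum_ncard_firstHits_le n _
      _ ≤ _ := by gcongr

end IsPiecewiseMonotone

section Interval

theorem exists_mem_Ico_castSucc_succ {α : Type*} [LinearOrder α] {l : ℕ} {c : Fin (l + 1) → α}
    {x : α} (hx : x ∈ Ico (c 0) (c (Fin.last l))) :
    ∃ i : Fin l, x ∈ Ico (c i.castSucc) (c i.succ) := by
  by_contra! h
  have hle (i : Fin (l + 1)) : c i ≤ x := by
    induction i using Fin.induction with
    | zero => exact hx.1
    | succ i ih => exact not_lt.1 fun hlt => h i ⟨ih, hlt⟩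
  exact hx.2.not_ge (hle _)

theorem IsAttractedToPeriodicOrbit.restrict {X : Type*} [TopologicalSpace X] {f : X → X}
    {S : Set X} (hS : IsClosed S) (hf : MapsTo f S S) {x : S}
    (h : IsAttractedToPeriodicOrbit f (x : X)) :
    IsAttractedToPeriodicOrbit (hf.restrict f S S) x := by
  obtain ⟨m, hm, p, hp, hx⟩ := h
  have hpS : p ∈ S := hS.mem_of_tendsto hx (.of_forall fun n => hf.iterate _ x.2)
  refine ⟨m, hm, ⟨p, hpS⟩, ?_, ?_⟩
  · rw [Function.IsPeriodicPt, hf.iterate_restrict]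
    exact Subtype.ext hp
  · simpa only [tendsto_subtype_rng, hf.iterate_restrict, MapsTo.val_restrict_apply] using hx

variable {α : Type*} {a b : α} {f : α → α} {l : ℕ} {c : Fin (l + 1) → α}

theorem isPiecewiseMonotone_restrict_Icc [LinearOrder α] [TopologicalSpace α]
    (hmaps : MapsTo f (Icc a b) (Icc a b))
    (hcont : ContinuousOn f (Icc a b)) (hc0 : c 0 = a) (hcl : c (Fin.last l) = b)
    (hlaps : ∀ i : Fin l, StrictMonoOn f (Icc (c i.castSucc) (c i.succ)) ∨
      StrictAntiOn f (Icc (c i.castSucc) (c i.succ))) :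
    IsPiecewiseMonotone (hmaps.restrict f (Icc a b) (Icc a b))
      (Subtype.val ⁻¹' (range c ∩ Ioo a b)) where
  continuous := hcont.mapsToRestrict hmaps
  injOn u v hdisj := by
    rcases le_or_gt v u with hvu | huv
    · exact (subsingleton_Icc_of_ge hvu).injOn _
    obtain ⟨i, hi⟩ := exists_mem_Ico_castSucc_succ (c := c) (x := (u : α))
      ⟨hc0.trans_le u.2.1, (Subtype.coe_lt_coe.2 huv).trans_le (v.2.2.trans_eq hcl.symm)⟩
    have hv : (v : α) ≤ c i.succ := by
      by_contra! hlt
      have hmem : c i.succ ∈ Ioo a b := ⟨u.2.1.trans_lt hi.2, hlt.trans_le v.2.2⟩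
      have hIoo : (⟨c i.succ, Ioo_subset_Icc_self hmem⟩ : Icc a b) ∈ Ioo u v := ⟨hi.2, hlt⟩
      exact disjoint_right.1 hdisj hIoo ⟨mem_range_self _, hmem⟩
    have hinj : InjOn f (Icc (c i.castSucc) (c i.succ)) :=
      (hlaps i).elim StrictMonoOn.injOn StrictAntiOn.injOn
    have hlap {x : Icc a b} (hx : x ∈ Icc u v) : (x : α) ∈ Icc (c i.castSucc) (c i.succ) :=
      Icc_subset_Icc hi.1 hv hx
    exact fun x hx y hy hxy =>
      Subtype.ext (hinj (hlap hx) (hlap hy) (congrArg Subtype.val hxy))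

theorem exp_entropy_algebraic_of_turning_points_attracted_general
    [ConditionallyCompleteLinearOrder α] [UniformSpace α] [OrderTopology α] [DenselyOrdered α]
    (hab : a ≤ b) (hmaps : MapsTo f (Icc a b) (Icc a b)) (hcont : ContinuousOn f (Icc a b))
    (hc0 : c 0 = a) (hcl : c (Fin.last l) = b)
    (hlaps : ∀ i : Fin l, StrictMonoOn f (Icc (c i.castSucc) (c i.succ)) ∨
      StrictAntiOn f (Icc (c i.castSucc) (c i.succ)))
    (hattr : ∀ i, c i ∈ Ioo a b → IsAttractedToPeriodicOrbit f (c i)) :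
    ∃ h : ℝ, 0 ≤ h ∧ Dynamics.coverEntropy f (Icc a b) = (h : EReal) ∧
      IsAlgebraic ℚ (Real.exp h) := by
  have : Fact (a ≤ b) := ⟨hab⟩
  have hg := isPiecewiseMonotone_restrict_Icc hmaps hcont hc0 hcl hlaps
  have hfin : (Subtype.val ⁻¹' (range c ∩ Ioo a b) : Set (Icc a b)).Finite :=
    ((finite_range c).inter_of_left _).preimage Subtype.val_injective.injOn
  obtain ⟨C, hC⟩ := hfin.exists_finset_coe
  rw [← hC] at hg
  rw [← Dynamics.coverEntropy_restrict hmaps]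
  refine hg.exists_coverEntropy_eq_and_isAlgebraic (hC.trans_subset fun x hx => hx.2) fun w hw => ?_
  obtain ⟨⟨i, hi⟩, hw⟩ := hC.subset hw
  exact .restrict isClosed_Icc hmaps (hi ▸ hattr i (hi ▸ hw))

end Interval

/-- For a continuous piecewise strictly monotone self-map of a compact interval whose turning
points are all attracted to periodic orbits, the topological entropy is a finite nonnegative
real number whose exponential is an algebraic number. -/
theorem exp_entropy_algebraic_of_turning_points_attracted
    (a b : ℝ) (hab : a < b) (f : ℝ → ℝ)
    (hmaps : Set.MapsTo f (Set.Icc a b) (Set.Icc a b))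
    (hcont : ContinuousOn f (Set.Icc a b))
    (l : ℕ) (hl : 1 ≤ l) (c : Fin (l + 1) → ℝ)
    (hmono : StrictMono c) (hc0 : c 0 = a) (hcl : c (Fin.last l) = b)
    (hlaps : ∀ i : Fin l,
      StrictMonoOn f (Set.Icc (c i.castSucc) (c i.succ)) ∨
        StrictAntiOn f (Set.Icc (c i.castSucc) (c i.succ)))
    (hattr : ∀ i : Fin (l + 1), (i : ℕ) ≠ 0 → (i : ℕ) ≠ l →
      ∃ m : ℕ, 1 ≤ m ∧ ∃ p ∈ Set.Icc a b, f^[m] p = p ∧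
        Filter.Tendsto (fun n : ℕ => f^[m * n] (c i)) Filter.atTop (nhds p)) :
    ∃ h : ℝ, 0 ≤ h ∧ Dynamics.coverEntropy f (Set.Icc a b) = (h : EReal) ∧
      IsAlgebraic ℚ (Real.exp h) := by
  refine exp_entropy_algebraic_of_turning_points_attracted_general hab.le hmaps hcont hc0 hcl
    hlaps fun i hi => ?_
  obtain ⟨m, hm, p, -, hp⟩ := hattr i (fun h => hi.1.ne' (by rw [← hc0]; congr; exact Fin.ext h))
    (fun h => hi.2.ne (by rw [← hcl]; congr; exact Fin.ext h))
  exact ⟨m, hm, p, hp⟩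
end

section
/- Let a < b be real numbers and f : [a,b] → [a,b] a continuous map for which there exist l ≥ 1 and points a = c₀ < c₁ < ⋯ < c_l = b such that f is strictly monotone on each lap [c_{i−1}, c_i]. For n ≥ 1 and x ∈ [a,b] let N_n(x) denote the (finite) number of points y ∈ [a,b] with f^{n}(y) = x. Then: (i) for every x ∈ [a,b], limsup_{n→∞} (1/n)·log(max(N_n(x),1)) ≤ h_top(f,[a,b]); and (ii) there exists x ∈ [a,b] for which limsup_{n→∞} (1/n)·log(max(N_n(x),1)) = h_top(f,[a,b]). -/
open Set Filter Topology

/-!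
Let `C` be the set of turning points. Since `f` is strictly monotone between consecutive points of
`C`, the map `f^[m]` is strictly monotone between consecutive points of the finite set `E` of points
whose orbit meets `C` before time `m`.

*Upper bound.* If the `f^[m]`-orbits of the points of a set `t` stay closer together than the gaps
of `E`, then each image of `t` spans at most one point of `E`, so each application of `f^[m]` is at
most two-to-one. Partitioning the `n`-th preimages of `x` according to a minimal dynamical cover of
cardinality `M_n` then gives `N_n(x) ≤ (#C + 1) ^ m * 2 ^ (n / m) * M_n`, and the factor
`2 ^ (n / m)` contributes only `log 2 / m` to the growth rate, which tends to `0` as `m → ∞`.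

*Equality.* For a finite grid `G` meeting every interval of length `ε`, the points whose orbit meets
`G` before time `n`, together with `a`, form a dynamical cover: a point and the nearest such point
to its left cannot be `ε`-separated before time `n`, as the intermediate value theorem would put
another such point between them. Hence the entropy is at most the largest growth rate at a point of
`G`. For every `x`, two `n`-th preimages are separated by a point whose orbit meets `C` before time
`n`, so the growth rate at `x` is at most the largest growth rate at a turning point.
-/

open Dynamics ENNReal ExpGrowth

section Counting

lemma encard_le_encard_add_one_of_interleaved {α : Type*} [LinearOrder α] {s t : Set α}
    (h : ∀ x ∈ s, ∀ y ∈ s, x < y → (t ∩ Ioo x y).Nonempty) : s.encard ≤ t.encard + 1 := by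
  rcases t.infinite_or_finite with ht | ht
  · simp [ht.encard_eq]
  refine ENat.forall_natCast_le_iff_le.1 fun k hk => ?_
  obtain ⟨u, hus, huk⟩ := exists_subset_encard_eq hk
  lift u to Finset α using finite_of_encard_eq_coe huk
  lift t to Finset α using ht
  rw [← huk]
  simp only [encard_coe_eq_coe_finsetCard]
  exact_mod_cast Finset.card_le_of_interleaved fun x hx y hy hxy _ => h x (hus hx) y (hus hy) hxy

lemma encard_le_encard_mul_of_fiber_le {α β : Type*} {s : Set α} {t : Set β} {g : α → β} {k : ℕ∞}
    (hg : MapsTo g s t) (hfib : ∀ z ∈ t, (s ∩ g ⁻¹' {z}).encard ≤ k) :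
    s.encard ≤ t.encard * k := by
  rcases t.infinite_or_finite with ht | ht
  · rcases eq_or_ne k 0 with rfl | hk
    · have hs : s = ∅ := eq_empty_of_forall_notMem fun x hx =>
        notMem_empty x <| encard_eq_zero.1 (le_zero_iff.1 (hfib _ (hg hx))) ▸ ⟨hx, rfl⟩
      simp [hs]
    · simp [ht.encard_eq, ENat.top_mul hk]
  lift t to Finset β using ht
  calc s.encard ≤ (⋃ z ∈ t, s ∩ g ⁻¹' {z}).encard :=
        encard_le_encard fun x hx => mem_biUnion (hg hx) ⟨hx, rfl⟩
    _ ≤ ∑ z ∈ t, (s ∩ g ⁻¹' {z}).encard := t.set_encard_biUnion_le _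
    _ ≤ ∑ _z ∈ t, k := Finset.sum_le_sum hfib
    _ = (t : Set β).encard * k := by simp

end Counting

section ExponentialGrowth

lemma ennreal_geom_sum_le {c : ℝ≥0∞} (hc : 1 < c) (hc_top : c ≠ ∞) (n : ℕ) :
    ∑ j ∈ Finset.range n, c ^ j ≤ (c - 1)⁻¹ * c ^ n := by
  rw [← ENNReal.div_eq_inv_mul, ENNReal.le_div_iff_mul_le (.inl (tsub_pos_of_lt hc).ne')
    (.inl (ENNReal.sub_ne_top hc_top))]
  calc (∑ j ∈ Finset.range n, c ^ j) * (c - 1)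
      ≤ (∑ j ∈ Finset.range n, (c - 1 + 1) ^ j) * (c - 1) + 1 := by
        rw [tsub_add_cancel_of_le hc.le]
        exact le_self_add
    _ = c ^ n := by rw [geom_sum_mul_add, tsub_add_cancel_of_le hc.le]

lemma exists_forall_le_mul_exp_pow {u : ℕ → ℝ≥0∞} (hu : ∀ n, u n ≠ ∞) {r : EReal} (hr : 0 ≤ r)
    (hur : expGrowthSup u < r) : ∃ b ≠ ∞, ∀ n, u n ≤ b * EReal.exp r ^ n := by
  obtain ⟨n₀, hn₀⟩ := eventually_atTop.1 (eventually_le_exp hur)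
  refine ⟨1 + ∑ j ∈ Finset.range n₀, u j, by simp [hu], fun n => ?_⟩
  rcases lt_or_ge n n₀ with hn | hn
  · calc u n ≤ ∑ j ∈ Finset.range n₀, u j :=
          Finset.single_le_sum_of_canonicallyOrdered (Finset.mem_range.2 hn)
      _ ≤ 1 + ∑ j ∈ Finset.range n₀, u j := le_add_self
      _ ≤ _ := le_mul_of_one_le_right' (one_le_pow₀ (EReal.one_le_exp_iff.2 hr))
  · calc u n ≤ EReal.exp (r * n) := hn₀ n hn
      _ = EReal.exp r ^ n := by rw [mul_comm, EReal.exp_nmul]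
      _ ≤ _ := le_mul_of_one_le_left' le_self_add

lemma expGrowthSup_sum_range_le {u : ℕ → ℝ≥0∞} (hu : ∀ n, u n ≠ ∞) :
    expGrowthSup (fun n => ∑ j ∈ Finset.range n, u j) ≤ expGrowthSup u ⊔ 0 := by
  refine EReal.le_of_forall_lt_iff_le.1 fun r hr => ?_
  obtain ⟨hur, hr0⟩ := max_lt_iff.1 hr
  obtain ⟨b, hb, hub⟩ := exists_forall_le_mul_exp_pow hu hr0.le hur
  set c := EReal.exp r
  have hc : 1 < c := by simpa [c] using hr0
  have hsum (n : ℕ) : ∑ j ∈ Finset.range n, u j ≤ b * (c - 1)⁻¹ * c ^ n :=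
    calc ∑ j ∈ Finset.range n, u j ≤ b * ∑ j ∈ Finset.range n, c ^ j := by
          rw [Finset.mul_sum]
          exact Finset.sum_le_sum fun j _ => hub j
      _ ≤ b * ((c - 1)⁻¹ * c ^ n) := by gcongr; exact ennreal_geom_sum_le hc (by simp [c]) n
      _ = b * (c - 1)⁻¹ * c ^ n := (mul_assoc ..).symm
  calc expGrowthSup (fun n => ∑ j ∈ Finset.range n, u j)
      ≤ expGrowthSup (fun n => c ^ n) := expGrowthSup_le_of_eventually_le
        (mul_ne_top hb (inv_ne_top.2 (tsub_pos_of_lt hc).ne')) (.of_forall hsum)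
    _ = r := by rw [expGrowthSup_pow, EReal.log_exp]

lemma coe_limsup_log_max_one_div_eq {u : ℕ → ℕ} {K : ℕ} (hu : ∀ n, u n ≤ K ^ n) :
    ((limsup (fun n : ℕ => Real.log (max (u n) 1 : ℕ) / n) atTop : ℝ) : EReal) =
      expGrowthSup (fun n => (u n : ℝ≥0∞)) ⊔ 0 := by
  have hlog (n : ℕ) : ((Real.log (max (u n) 1 : ℕ) / n : ℝ) : EReal) =
      ENNReal.log (max (u n) 1 : ℕ) / n := by
    rw [← ENNReal.ofReal_natCast, ENNReal.log_ofReal_of_pos (by positivity), EReal.coe_div,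
      EReal.coe_coe_eq_natCast]
  have hlower (n : ℕ) : 0 ≤ Real.log (max (u n) 1 : ℕ) / n := by positivity
  have hupper (n : ℕ) : Real.log (max (u n) 1 : ℕ) / n ≤ Real.log (max K 1 : ℕ) := by
    refine div_le_of_le_mul₀ n.cast_nonneg (by positivity) ?_
    rw [mul_comm, ← Real.log_pow, ← Nat.cast_pow]
    refine Real.log_le_log (by positivity) (Nat.cast_le.2 (max_le ?_ ?_))
    · exact (hu n).trans (Nat.pow_le_pow_left (le_max_left ..) n)
    · exact Nat.one_le_pow _ _ (by positivity)
  have hmap := Monotone.map_limsup_of_continuousAt (F := atTop) EReal.coe_strictMono.monotone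
    (fun n : ℕ => Real.log (max (u n) 1 : ℕ) / n) continuous_coe_real_ereal.continuousAt
    (isBoundedUnder_of ⟨_, hupper⟩) (isBoundedUnder_of ⟨_, hlower⟩).isCobounded_flip
  calc _ = expGrowthSup (fun n => ((max (u n) 1 : ℕ) : ℝ≥0∞)) := by
        rw [hmap, expGrowthSup]
        simp only [Function.comp_def, hlog]
    _ = expGrowthSup ((fun n => (u n : ℝ≥0∞)) ⊔ fun _ => 1) := by
        congr 1 with n
        simp [Nat.mono_cast.map_max]
    _ = _ := by rw [expGrowthSup_sup, expGrowthSup_const one_ne_zero one_ne_top]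

end ExponentialGrowth

section Preimages

variable {α : Type*}

/-- The `n`-th preimages of `x` in `s`, counted by `N_n(x)`. -/
def iteratePreimage (f : α → α) (s : Set α) (n : ℕ) (x : α) : Set α := {y ∈ s | f^[n] y = x}

/-- The points of `s` whose orbit meets `C` before time `n`. If `C` contains the turning points of
`f`, these include the turning points of `f^[n]`. -/
def hittingSet (f : α → α) (s C : Set α) (n : ℕ) : Set α := {y ∈ s | ∃ j < n, f^[j] y ∈ C}

/-- The exponential growth rate of the number of `n`-th preimages of `x` in `s`. The truncation at
`0` accounts for the times at which `x` has no preimage, and corresponds to `max (N_n(x), 1)`. -/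
noncomputable def preimageGrowthRate (f : α → α) (s : Set α) (x : α) : EReal :=
  expGrowthSup (fun n => ((iteratePreimage f s n x).encard : ℝ≥0∞)) ⊔ 0

lemma monotone_hittingSet (f : α → α) (s C : Set α) : Monotone (hittingSet f s C) :=
  fun _ _ hmn _ ⟨hy, j, hj, hC⟩ => ⟨hy, j, hj.trans_le hmn, hC⟩

lemma hittingSet_eq_biUnion (f : α → α) (s C : Set α) (n : ℕ) :
    hittingSet f s C n = ⋃ c ∈ C, ⋃ j ∈ Finset.range n, iteratePreimage f s j c := by
  ext y
  simp only [hittingSet, iteratePreimage, mem_ofPred_eq, mem_iUnion, Finset.mem_range, exists_prop]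
  exact ⟨fun ⟨hy, j, hj, hC⟩ => ⟨_, hC, j, hj, hy, rfl⟩,
    fun ⟨_, hC, j, hj, hy, hyc⟩ => ⟨hy, j, hj, hyc.symm ▸ hC⟩⟩

lemma finite_hittingSet {f : α → α} {s C : Set α} (hC : C.Finite)
    (h : ∀ c ∈ C, ∀ j, (iteratePreimage f s j c).Finite) (n : ℕ) : (hittingSet f s C n).Finite := by
  rw [hittingSet_eq_biUnion]
  exact hC.biUnion fun c hc => (Finset.range n).finite_toSet.biUnion fun j _ => h c hc j

lemma encard_hittingSet_le (f : α → α) (s : Set α) (C : Finset α) (n : ℕ) :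
    (hittingSet f s C n).encard ≤
      ∑ c ∈ C, ∑ j ∈ Finset.range n, (iteratePreimage f s j c).encard := by
  rw [hittingSet_eq_biUnion]
  exact (C.set_encard_biUnion_le _).trans
    (Finset.sum_le_sum fun c _ => Finset.set_encard_biUnion_le _ _)

end Preimages

section Separation

lemma intermediate_value_uIoo {α δ : Type*} [ConditionallyCompleteLinearOrder α]
    [TopologicalSpace α] [OrderTopology α] [DenselyOrdered α] [LinearOrder δ] [TopologicalSpace δ]
    [OrderClosedTopology δ] {a b : α} {f : α → δ} (hf : ContinuousOn f (uIcc a b)) :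
    uIoo (f a) (f b) ⊆ f '' uIoo a b := by
  intro e he
  obtain ⟨w, hw, rfl⟩ := intermediate_value_uIcc hf (uIoo_subset_uIcc_self he)
  have hwa : w ≠ a := by rintro rfl; exact left_notMem_uIoo he
  have hwb : w ≠ b := by rintro rfl; exact right_notMem_uIoo he
  exact ⟨w, by grind [uIcc, uIoo], rfl⟩

variable {α β : Type*}

/-- Any two distinct points of `s` with the same image under `f` have a point of `C` strictly
between them. For continuous `f` on an interval `s`, this says that `f` is strictly monotone
between consecutive points of `C`. -/
def SeparatesFibers [LinearOrder α] (f : α → β) (s C : Set α) : Prop :=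
  s.Pairwise fun p q => f p = f q → (C ∩ uIoo p q).Nonempty

namespace SeparatesFibers

section LinearOrder

variable [LinearOrder α] {s C : Set α}

lemma of_injOn_Icc {l : ℕ} {c : Fin (l + 1) → α} {f : α → β}
    (h : ∀ i : Fin l, InjOn f (Icc (c i.castSucc) (c i.succ))) :
    SeparatesFibers f (Icc (c 0) (c (Fin.last l))) (range c) := by
  intro p hp q hq hpq hfpq
  wlog hlt : p < q generalizing p q
  · rw [uIoo_comm]
    exact this hq hp hpq.symm hfpq.symm (hpq.lt_or_gt.resolve_left hlt)
  by_contra hempty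
  have hle (i : Fin (l + 1)) : c i ≤ p := by
    induction i using Fin.induction with
    | zero => exact hp.1
    | succ i ih =>
      by_contra! hpc
      have hqc : q ≤ c i.succ := by
        by_contra! hcq
        exact hempty ⟨_, mem_range_self i.succ, mem_uIoo_of_lt hpc hcq⟩
      exact hpq (h i ⟨ih, hpc.le⟩ ⟨ih.trans hlt.le, hqc⟩ hfpq)
  exact (hle (Fin.last l)).not_gt (hlt.trans_le hq.2)

lemma encard_inter_preimage_le {g : α → β} (h : SeparatesFibers g s C) (z : β) :
    (s ∩ g ⁻¹' {z}).encard ≤ C.encard + 1 := by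
  refine encard_le_encard_add_one_of_interleaved fun p hp q hq hpq => ?_
  rw [← uIoo_of_lt hpq]
  exact h hp.1 hq.1 hpq.ne (hp.2.trans hq.2.symm)

lemma encard_iteratePreimage_le_pow {f : α → α} (h : SeparatesFibers f s C)
    (hmaps : MapsTo f s s) (n : ℕ) (x : α) :
    (iteratePreimage f s n x).encard ≤ (C.encard + 1) ^ n := by
  induction n with
  | zero =>
    rw [pow_zero]
    exact encard_le_one_iff.2 fun y z hy hz => hy.2.trans hz.2.symm
  | succ n ih =>
    rw [pow_succ]
    have hf : MapsTo f (iteratePreimage f s (n + 1) x) (iteratePreimage f s n x) :=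
      fun y hy => ⟨hmaps hy.1, hy.2⟩
    have hfib (z : α) : (iteratePreimage f s (n + 1) x ∩ f ⁻¹' {z}).encard ≤ C.encard + 1 :=
      (encard_le_encard (inter_subset_inter_left _ (sep_subset _ _))).trans
        (h.encard_inter_preimage_le z)
    exact (encard_le_encard_mul_of_fiber_le hf fun z _ => hfib z).trans (by gcongr)

lemma finite_iteratePreimage {f : α → α} (h : SeparatesFibers f s C) (hC : C.Finite)
    (hmaps : MapsTo f s s) (n : ℕ) (x : α) : (iteratePreimage f s n x).Finite := by
  have hK : C.encard + 1 < ⊤ := by simpa using hC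
  exact encard_lt_top_iff.1 <| (h.encard_iteratePreimage_le_pow hmaps n x).trans_lt
    (ENat.pow_lt_top_iff.2 (.inl hK))

lemma coe_limsup_log_ncard_div_eq {f : α → α} (h : SeparatesFibers f s C) (hC : C.Finite)
    (hmaps : MapsTo f s s) (x : α) :
    ((limsup (fun n : ℕ => Real.log (max (iteratePreimage f s n x).ncard 1 : ℕ) / n) atTop : ℝ) :
      EReal) = preimageGrowthRate f s x := by
  have hencard (n : ℕ) :
      ((iteratePreimage f s n x).ncard : ℕ∞) = (iteratePreimage f s n x).encard :=
    (h.finite_iteratePreimage hC hmaps n x).cast_ncard_eq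
  have hpow (n : ℕ) : (iteratePreimage f s n x).ncard ≤ (C.ncard + 1) ^ n := by
    rw [← Nat.cast_le (α := ℕ∞), hencard]
    simpa [hC.cast_ncard_eq] using h.encard_iteratePreimage_le_pow hmaps n x
  rw [coe_limsup_log_max_one_div_eq hpow]
  simp only [preimageGrowthRate, ← hencard, ENat.toENNReal_coe]

end LinearOrder

lemma iterate [ConditionallyCompleteLinearOrder α] [DenselyOrdered α] [TopologicalSpace α]
    [OrderTopology α] {f : α → α} {s C : Set α} [hs : OrdConnected s] (h : SeparatesFibers f s C)
    (hmaps : MapsTo f s s) (hcont : ContinuousOn f s) (n : ℕ) :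
    SeparatesFibers f^[n] s (hittingSet f s C n) := by
  induction n with
  | zero => exact fun p _ q _ hpq hfpq => absurd hfpq hpq
  | succ n ih =>
    intro p hp q hq hpq hfpq
    by_cases hn : f^[n] p = f^[n] q
    · exact (ih hp hq hpq hn).mono
        (inter_subset_inter_left _ (monotone_hittingSet f s C n.le_succ))
    · simp only [Function.iterate_succ_apply'] at hfpq
      have hsub : uIcc p q ⊆ s := hs.uIcc_subset hp hq
      obtain ⟨_, hC, he⟩ := h (hmaps.iterate n hp) (hmaps.iterate n hq) hn hfpq
      obtain ⟨w, hw, rfl⟩ := intermediate_value_uIoo ((hcont.iterate hmaps n).mono hsub) he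
      exact ⟨w, ⟨hsub (uIoo_subset_uIcc_self hw), n, n.lt_succ_self, hC⟩, hw⟩

end SeparatesFibers

end Separation

section UpperBound

lemma subsingleton_inter_upperClosure_inter_lowerClosure {t E : Set ℝ}
    (ht : ∀ x ∈ t, ∀ y ∈ t, edist x y < E.einfsep) :
    (E ∩ (upperClosure t ∩ lowerClosure t)).Subsingleton := by
  rintro e ⟨heE, ⟨x, hx, hxe⟩, ⟨y, hy, hey⟩⟩ e' ⟨heE', ⟨x', hx', hxe'⟩, ⟨y', hy', hey'⟩⟩
  by_contra hne
  wlog hlt : e < e' generalizing e e' x y x' y'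
  · exact this heE' x' hx' hxe' y' hy' hey' heE x hx hxe y hy hey (Ne.symm hne)
      ((Ne.symm hne).lt_of_le (not_lt.1 hlt))
  refine (einfsep_le_edist_of_mem heE heE' hne).not_gt ((ht x hx y' hy').trans_le' ?_)
  rw [edist_dist, edist_dist]
  exact ENNReal.ofReal_le_ofReal (Real.dist_le_of_mem_uIcc
    (mem_uIcc_of_le hxe (hlt.le.trans hey')) (mem_uIcc_of_le (hxe.trans hlt.le) hey'))

namespace SeparatesFibers

variable {s t C E : Set ℝ} {f : ℝ → ℝ}

lemma encard_inter_preimage_le_two {β : Type*} {g : ℝ → β} (h : SeparatesFibers g s E)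
    (hts : t ⊆ s) (ht : ∀ x ∈ t, ∀ y ∈ t, edist x y < E.einfsep) (z : β) :
    (t ∩ g ⁻¹' {z}).encard ≤ 2 := by
  have hsep : SeparatesFibers g t (E ∩ (upperClosure t ∩ lowerClosure t)) := by
    intro p hp q hq hpq hgpq
    obtain ⟨e, heE, he⟩ := h (hts hp) (hts hq) hpq hgpq
    refine ⟨e, ⟨heE, ?_⟩, he⟩
    rcases mem_uIcc.1 (uIoo_subset_uIcc_self he) with he | he
    exacts [⟨⟨p, hp, he.1⟩, ⟨q, hq, he.2⟩⟩, ⟨⟨q, hq, he.1⟩, ⟨p, hp, he.2⟩⟩]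
  calc (t ∩ g ⁻¹' {z}).encard
      ≤ (E ∩ (upperClosure t ∩ lowerClosure t)).encard + 1 := hsep.encard_inter_preimage_le z
    _ ≤ 1 + 1 := by
        gcongr
        exact encard_le_one_iff_subsingleton.2
          (subsingleton_inter_upperClosure_inter_lowerClosure ht)
    _ = 2 := one_add_one_eq_two

lemma encard_inter_preimage_iterate_le_two_pow {g : ℝ → ℝ} (h : SeparatesFibers g s E)
    (hmaps : MapsTo g s s) (hts : t ⊆ s) {q : ℕ}
    (ht : ∀ x ∈ t, ∀ y ∈ t, ∀ k < q, edist (g^[k] x) (g^[k] y) < E.einfsep) (z : ℝ) :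
    (t ∩ g^[q] ⁻¹' {z}).encard ≤ 2 ^ q := by
  induction q generalizing t with
  | zero =>
    rw [pow_zero]
    exact encard_le_one_iff.2 fun x y hx hy => hx.2.trans hy.2.symm
  | succ q ih =>
    have hg : MapsTo g (t ∩ g^[q + 1] ⁻¹' {z}) (g '' t ∩ g^[q] ⁻¹' {z}) :=
      fun x hx => ⟨mem_image_of_mem g hx.1, hx.2⟩
    have hfib (y : ℝ) : (t ∩ g^[q + 1] ⁻¹' {z} ∩ g ⁻¹' {y}).encard ≤ 2 :=
      (encard_le_encard (inter_subset_inter_left _ inter_subset_left)).trans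
        (h.encard_inter_preimage_le_two hts (fun x hx y hy => ht x hx y hy 0 q.succ_pos) y)
    have himage : (g '' t ∩ g^[q] ⁻¹' {z}).encard ≤ 2 ^ q := by
      refine ih ((image_mono hts).trans hmaps.image_subset) ?_
      rintro _ ⟨x, hx, rfl⟩ _ ⟨y, hy, rfl⟩ k hk
      exact ht x hx y hy (k + 1) (Nat.succ_lt_succ hk)
    rw [pow_succ]
    exact (encard_le_encard_mul_of_fiber_le hg fun y _ => hfib y).trans (by gcongr)

lemma encard_le_of_subset_iteratePreimage [OrdConnected s] (h : SeparatesFibers f s C)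
    (hmaps : MapsTo f s s) (hcont : ContinuousOn f s) {m n : ℕ} {x : ℝ}
    (hts : t ⊆ iteratePreimage f s n x)
    (ht : ∀ y ∈ t, ∀ z ∈ t, ∀ k < n, edist (f^[k] y) (f^[k] z) < (hittingSet f s C m).einfsep) :
    t.encard ≤ (C.encard + 1) ^ (n % m) * 2 ^ (n / m) := by
  have htimes {k : ℕ} (hk : k < n / m) : m * k < n :=
    (Nat.mul_lt_mul_of_pos_left hk (Nat.pos_of_ne_zero (by rintro rfl; simp at hk))).trans_le
      (Nat.mul_div_le n m)
  have hmap : MapsTo (f^[m])^[n / m] t (iteratePreimage f s (n % m) x) := fun y hy =>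
    ⟨(hmaps.iterate m).iterate _ (hts hy).1, by
      rw [← Function.iterate_mul, ← Function.iterate_add_apply, Nat.mod_add_div, (hts hy).2]⟩
  have hfib (z : ℝ) : (t ∩ (f^[m])^[n / m] ⁻¹' {z}).encard ≤ 2 ^ (n / m) := by
    refine (h.iterate hmaps hcont m).encard_inter_preimage_iterate_le_two_pow (hmaps.iterate m)
      (hts.trans (sep_subset _ _)) (fun y hy z hz k hk => ?_) z
    simpa only [Function.iterate_mul] using ht y hy z hz _ (htimes hk)
  calc t.encard ≤ (iteratePreimage f s (n % m) x).encard * 2 ^ (n / m) :=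
        encard_le_encard_mul_of_fiber_le hmap fun z _ => hfib z
    _ ≤ _ := by gcongr; exact h.encard_iteratePreimage_le_pow hmaps _ x

lemma encard_iteratePreimage_le_coverMincard_mul [OrdConnected s] (h : SeparatesFibers f s C)
    (hmaps : MapsTo f s s) (hcont : ContinuousOn f s) (m n : ℕ) (x : ℝ) :
    (iteratePreimage f s n x).encard ≤
      coverMincard f s {p | edist p.1 p.2 < (hittingSet f s C m).einfsep / 2} n *
        ((C.encard + 1) ^ (n % m) * 2 ^ (n / m)) := by
  set U : Set (ℝ × ℝ) := {p | edist p.1 p.2 < (hittingSet f s C m).einfsep / 2}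
  rcases eq_top_or_lt_top (coverMincard f s U n) with htop | hfin
  · rw [htop, ENat.top_mul (by positivity)]
    exact le_top
  obtain ⟨A, hA, hcard⟩ := (coverMincard_finite_iff f s U n).1 hfin
  choose! φ hφA hφ using fun y (hy : y ∈ s) => hA hy
  have hmap : MapsTo φ (iteratePreimage f s n x) A := fun y hy => hφA y hy.1
  rw [← hcard, ← encard_coe_eq_coe_finsetCard]
  refine encard_le_encard_mul_of_fiber_le hmap fun a _ =>
    h.encard_le_of_subset_iteratePreimage hmaps hcont inter_subset_left ?_
  rintro y ⟨hy, rfl⟩ z ⟨hz, hzy⟩ k hk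
  have hya := mem_dynEntourage.1 (hφ y hy.1) k hk
  have hza := mem_dynEntourage.1 (hφ z hz.1) k hk
  rw [mem_singleton_iff.1 hzy] at hza
  calc edist (f^[k] y) (f^[k] z)
      ≤ edist (f^[k] y) (f^[k] (φ y)) + edist (f^[k] z) (f^[k] (φ y)) := edist_triangle_right ..
    _ < (hittingSet f s C m).einfsep / 2 + (hittingSet f s C m).einfsep / 2 :=
        ENNReal.add_lt_add hya hza
    _ = (hittingSet f s C m).einfsep := ENNReal.add_halves _

lemma exists_uniformity_encard_iteratePreimage_le [OrdConnected s] (h : SeparatesFibers f s C)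
    (hmaps : MapsTo f s s) (hcont : ContinuousOn f s) (hC : C.Finite) {b : ℝ≥0∞} (hb : 1 < b) :
    ∃ U ∈ uniformity ℝ, ∃ K ≠ ∞, ∀ n x,
      ((iteratePreimage f s n x).encard : ℝ≥0∞) ≤ K * (coverMincard f s U n * b ^ n) := by
  obtain ⟨m, hm, hm0⟩ : ∃ m : ℕ, 2 ≤ b ^ m ∧ 0 < m :=
    (((ENNReal.tendsto_pow_atTop_nhds_top_iff.2 hb).eventually (eventually_ge_nhds (by simp))).and
      (eventually_gt_atTop 0)).exists
  set E := hittingSet f s C m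
  have hE : E.Finite := finite_hittingSet hC (fun c _ j => h.finite_iteratePreimage hC hmaps j c) m
  set K : ℝ≥0∞ := C.encard + 1
  have hK : K ≠ ∞ := by simpa [K] using hC
  refine ⟨{p | edist p.1 p.2 < E.einfsep / 2},
    edist_mem_uniformity (ENNReal.half_pos hE.einfsep_pos.ne'), K ^ m, pow_ne_top hK, fun n x => ?_⟩
  set N := coverMincard f s {p | edist p.1 p.2 < E.einfsep / 2} n
  calc ((iteratePreimage f s n x).encard : ℝ≥0∞)
      ≤ N * (K ^ (n % m) * 2 ^ (n / m)) := by
        simpa using ENat.toENNReal_mono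
          (h.encard_iteratePreimage_le_coverMincard_mul hmaps hcont m n x)
    _ ≤ N * (K ^ m * (b ^ m) ^ (n / m)) := by
        gcongr
        exacts [le_add_self, (Nat.mod_lt n hm0).le]
    _ ≤ N * (K ^ m * b ^ n) := by
        rw [← pow_mul]
        gcongr
        exacts [hb.le, Nat.mul_div_le n m]
    _ = K ^ m * (N * b ^ n) := mul_left_comm ..

lemma preimageGrowthRate_le_coverEntropy_add_log [OrdConnected s] (h : SeparatesFibers f s C)
    (hmaps : MapsTo f s s) (hcont : ContinuousOn f s) (hs : s.Nonempty) (hC : C.Finite)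
    {b : ℝ≥0∞} (hb : 1 < b) (x : ℝ) :
    preimageGrowthRate f s x ≤ coverEntropy f s + ENNReal.log b := by
  obtain ⟨U, hU, K, hK, hcount⟩ := h.exists_uniformity_encard_iteratePreimage_le hmaps hcont hC hb
  have hcover : 0 ≤ coverEntropyEntourage f s U := coverEntropyEntourage_nonneg f hs U
  have hle : coverEntropyEntourage f s U ≤ coverEntropy f s :=
    coverEntropyEntourage_le_coverEntropy f s hU
  have hlog : 0 < ENNReal.log b := ENNReal.zero_lt_log_iff.2 hb
  refine max_le ?_ (add_nonneg (hcover.trans hle) hlog.le)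
  calc expGrowthSup (fun n => ((iteratePreimage f s n x).encard : ℝ≥0∞))
      ≤ expGrowthSup ((fun n => (coverMincard f s U n : ℝ≥0∞)) * fun n => b ^ n) :=
        expGrowthSup_le_of_eventually_le hK (.of_forall fun n => hcount n x)
    _ ≤ coverEntropyEntourage f s U + expGrowthSup fun n => b ^ n := by
        refine expGrowthSup_mul_le (.inl (EReal.bot_lt_zero.trans_le hcover).ne') (.inr ?_)
        rw [expGrowthSup_pow]
        exact (EReal.bot_lt_zero.trans hlog).ne'
    _ ≤ coverEntropy f s + ENNReal.log b := by
        rw [expGrowthSup_pow]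
        gcongr

theorem preimageGrowthRate_le_coverEntropy [OrdConnected s] (h : SeparatesFibers f s C)
    (hmaps : MapsTo f s s) (hcont : ContinuousOn f s) (hs : s.Nonempty) (hC : C.Finite) (x : ℝ) :
    preimageGrowthRate f s x ≤ coverEntropy f s := by
  refine EReal.le_of_forall_lt_iff_le.1 fun z hz => ?_
  obtain ⟨r, hr, hrz⟩ := EReal.lt_iff_exists_real_btwn.1 hz
  have hb : 1 < EReal.exp ((z - r : ℝ) : EReal) :=
    EReal.one_lt_exp_iff.2 (EReal.coe_pos.2 (sub_pos.2 (EReal.coe_lt_coe_iff.1 hrz)))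
  calc preimageGrowthRate f s x
      ≤ coverEntropy f s + ENNReal.log (EReal.exp ((z - r : ℝ) : EReal)) :=
        h.preimageGrowthRate_le_coverEntropy_add_log hmaps hcont hs hC hb x
    _ ≤ r + ((z - r : ℝ) : EReal) := by
        rw [EReal.log_exp]
        gcongr
    _ = z := by rw [← EReal.coe_add, add_sub_cancel]

end SeparatesFibers

end UpperBound

section LowerBound

lemma exists_finite_inter_uIoo_nonempty {s : Set ℝ} [hs : OrdConnected s] (hs' : TotallyBounded s)
    {ε : ℝ} (hε : 0 < ε) :
    ∃ G : Set ℝ, G.Finite ∧ ∀ p ∈ s, ∀ q ∈ s, ε ≤ dist p q → (G ∩ uIoo p q).Nonempty := by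
  obtain ⟨G, hG, hcover⟩ := Metric.totallyBounded_iff.1 hs' (ε / 2) (half_pos hε)
  refine ⟨G, hG, fun p hp q hq hpq => ?_⟩
  obtain ⟨g, hg, hgm⟩ := mem_iUnion₂.1 (hcover (hs.convex.midpoint_mem (𝕜 := ℝ) hp hq))
  refine ⟨g, hg, ?_⟩
  rw [Metric.mem_ball, Real.dist_eq, midpoint_eq_smul_add, smul_eq_mul, invOf_eq_inv] at hgm
  rw [Real.dist_eq] at hpq
  obtain ⟨hg₁, hg₂⟩ := abs_lt.1 hgm
  rcases le_abs.1 hpq with h | h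
  · exact mem_uIoo_of_gt (by linarith) (by linarith)
  · exact mem_uIoo_of_lt (by linarith) (by linarith)

lemma expGrowthSup_encard_hittingSet_le {α : Type*} {f : α → α} {s C : Set α} (hC : C.Finite)
    (hfin : ∀ c ∈ C, ∀ j, (iteratePreimage f s j c).Finite) {r : EReal}
    (hr : ∀ c ∈ C, preimageGrowthRate f s c ≤ r) :
    expGrowthSup (fun n => ((hittingSet f s C n).encard : ℝ≥0∞)) ≤ r := by
  lift C to Finset α using hC
  set u : α → ℕ → ℝ≥0∞ := fun c j => (iteratePreimage f s j c).encard
  have hsum (n : ℕ) : ((hittingSet f s C n).encard : ℝ≥0∞) ≤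
      ∑ c ∈ C, ∑ j ∈ Finset.range n, u c j := by
    simpa [u, ← ENat.toENNRealRingHom_apply] using
      ENat.toENNReal_mono (encard_hittingSet_le f s C n)
  calc expGrowthSup (fun n => ((hittingSet f s C n).encard : ℝ≥0∞))
      ≤ expGrowthSup (∑ c ∈ C, fun n => ∑ j ∈ Finset.range n, u c j) :=
        expGrowthSup_monotone fun n => by simpa using hsum n
    _ ≤ r := by
        rw [expGrowthSup_sum]
        refine iSup₂_le fun c hc => (expGrowthSup_sum_range_le fun j => ?_).trans (hr c hc)
        simpa [u] using hfin c hc j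

section IsDynCoverOf

variable {α : Type*} [ConditionallyCompleteLinearOrder α] [DenselyOrdered α] [TopologicalSpace α]
  [OrderTopology α] {a b : α} {f : α → α} {G : Set α} {U : SetRel α α} {n : ℕ}

lemma isDynCoverOf_insert_hittingSet (hmaps : MapsTo f (Icc a b) (Icc a b))
    (hcont : ContinuousOn f (Icc a b)) (hfin : (hittingSet f (Icc a b) G n).Finite)
    (hG : ∀ p ∈ Icc a b, ∀ q ∈ Icc a b, (p, q) ∉ U → (G ∩ uIoo p q).Nonempty) :
    IsDynCoverOf f (Icc a b) U n (insert a (hittingSet f (Icc a b) G n)) := by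
  intro x hx
  set H := insert a (hittingSet f (Icc a b) G n)
  have hHI : H ⊆ Icc a b := insert_subset ⟨le_rfl, hx.1.trans hx.2⟩ (sep_subset _ _)
  obtain ⟨d, ⟨hdH, hdx⟩, hdmax⟩ := exists_max_image (H ∩ Iic x) id
    ((hfin.insert a).inter_of_left _) ⟨a, mem_insert a _, hx.1⟩
  refine ⟨d, hdH, mem_dynEntourage.2 fun k hk => by_contra fun hkU => ?_⟩
  have hsub : uIcc x d ⊆ Icc a b := ordConnected_Icc.uIcc_subset hx (hHI hdH)
  obtain ⟨_, heG, he⟩ := hG _ (hmaps.iterate k hx) _ (hmaps.iterate k (hHI hdH)) hkU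
  obtain ⟨w, hw, rfl⟩ := intermediate_value_uIoo ((hcont.iterate hmaps k).mono hsub) he
  have hwH : w ∈ H := mem_insert_of_mem _ ⟨hsub (uIoo_subset_uIcc_self hw), k, hk, heG⟩
  rw [uIoo_of_ge hdx] at hw
  exact (hdmax w ⟨hwH, hw.2.le⟩).not_gt hw.1

lemma coverMincard_le_encard_hittingSet_add_one (hmaps : MapsTo f (Icc a b) (Icc a b))
    (hcont : ContinuousOn f (Icc a b))
    (hG : ∀ p ∈ Icc a b, ∀ q ∈ Icc a b, (p, q) ∉ U → (G ∩ uIoo p q).Nonempty) :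
    coverMincard f (Icc a b) U n ≤ (hittingSet f (Icc a b) G n).encard + 1 := by
  rcases (hittingSet f (Icc a b) G n).infinite_or_finite with hinf | hfin
  · simp [hinf.encard_eq]
  have hcover := isDynCoverOf_insert_hittingSet hmaps hcont hfin hG
  rw [← (hfin.insert a).coe_toFinset] at hcover
  calc coverMincard f (Icc a b) U n ≤ _ := hcover.coverMincard_le_card
    _ = (insert a (hittingSet f (Icc a b) G n)).encard :=
        ((hfin.insert a).encard_eq_coe_toFinset_card).symm
    _ ≤ _ := encard_insert_le _ _

end IsDynCoverOf

lemma SeparatesFibers.preimageGrowthRate_le_expGrowthSup_hittingSet {α : Type*}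
    [ConditionallyCompleteLinearOrder α] [DenselyOrdered α] [TopologicalSpace α]
    [OrderTopology α] {f : α → α} {s C : Set α} [OrdConnected s] (h : SeparatesFibers f s C)
    (hmaps : MapsTo f s s) (hcont : ContinuousOn f s) (x : α) :
    preimageGrowthRate f s x ≤
      expGrowthSup (fun n => ((hittingSet f s C n).encard : ℝ≥0∞)) ⊔ 0 := by
  have hencard (n : ℕ) : (iteratePreimage f s n x).encard ≤ (hittingSet f s C n).encard + 1 :=
    (h.iterate hmaps hcont n).encard_inter_preimage_le x
  have hcount (n : ℕ) : ((iteratePreimage f s n x).encard : ℝ≥0∞) ≤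
      (hittingSet f s C n).encard + 1 := by
    simpa using ENat.toENNReal_mono (hencard n)
  refine max_le ?_ le_sup_right
  rw [← expGrowthSup_const one_ne_zero one_ne_top, ← expGrowthSup_add]
  exact expGrowthSup_monotone hcount

theorem SeparatesFibers.coverEntropy_le {a b : ℝ} {f : ℝ → ℝ} {C : Set ℝ}
    (h : SeparatesFibers f (Icc a b) C) (hmaps : MapsTo f (Icc a b) (Icc a b))
    (hcont : ContinuousOn f (Icc a b)) (hC : C.Finite) {r : EReal} (hr0 : 0 ≤ r)
    (hr : ∀ c ∈ C, preimageGrowthRate f (Icc a b) c ≤ r) :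
    coverEntropy f (Icc a b) ≤ r := by
  have hfin (x : ℝ) (j : ℕ) := h.finite_iteratePreimage hC hmaps j x
  have hrate (x : ℝ) : preimageGrowthRate f (Icc a b) x ≤ r :=
    (h.preimageGrowthRate_le_expGrowthSup_hittingSet hmaps hcont x).trans
      (max_le (expGrowthSup_encard_hittingSet_le hC (fun c _ => hfin c) hr) hr0)
  rw [coverEntropy_eq_iSup_basis Metric.uniformity_basis_dist]
  refine iSup₂_le fun ε hε => ?_
  obtain ⟨G, hG, hGε⟩ := exists_finite_inter_uIoo_nonempty (totallyBounded_Icc a b) hε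
  have hcount (n : ℕ) : (coverMincard f (Icc a b) {p | dist p.1 p.2 < ε} n : ℝ≥0∞) ≤
      (hittingSet f (Icc a b) G n).encard + 1 := by
    simpa using ENat.toENNReal_mono (coverMincard_le_encard_hittingSet_add_one hmaps hcont
      fun p hp q hq hpq => hGε p hp q hq (not_lt.1 hpq))
  calc coverEntropyEntourage f (Icc a b) {p | dist p.1 p.2 < ε}
      ≤ expGrowthSup ((fun n => ((hittingSet f (Icc a b) G n).encard : ℝ≥0∞)) + fun _ => 1) :=
        expGrowthSup_monotone hcount
    _ ≤ r := by
        rw [expGrowthSup_add, expGrowthSup_const one_ne_zero one_ne_top]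
        exact max_le (expGrowthSup_encard_hittingSet_le hG (fun g _ => hfin g) fun g _ => hrate g)
          hr0

end LowerBound

/-- For a continuous piecewise strictly monotone self-map of `[a,b]`, the exponential growth
rate of the number `N_n(x)` of `n`-th preimages of any point `x` is at most the topological
entropy, and equality is achieved at some point. -/
theorem preimage_growth_rate_and_entropy
    (a b : ℝ) (hab : a < b) (f : ℝ → ℝ)
    (hmaps : Set.MapsTo f (Set.Icc a b) (Set.Icc a b))
    (hcont : ContinuousOn f (Set.Icc a b))
    (l : ℕ) (hl : 1 ≤ l) (c : Fin (l + 1) → ℝ)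
    (hmono : StrictMono c) (hc0 : c 0 = a) (hcl : c (Fin.last l) = b)
    (hlaps : ∀ i : Fin l,
      StrictMonoOn f (Set.Icc (c i.castSucc) (c i.succ)) ∨
        StrictAntiOn f (Set.Icc (c i.castSucc) (c i.succ)))
    (N : ℕ → ℝ → ℕ)
    (hN : ∀ (n : ℕ) (x : ℝ), N n x = Set.ncard {y ∈ Set.Icc a b | f^[n] y = x}) :
    (∀ x ∈ Set.Icc a b,
      ((Filter.limsup (fun n : ℕ => Real.log (max (N n x) 1 : ℕ) / n) Filter.atTop : ℝ) : EReal)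
        ≤ Dynamics.coverEntropy f (Set.Icc a b)) ∧
    (∃ x ∈ Set.Icc a b,
      ((Filter.limsup (fun n : ℕ => Real.log (max (N n x) 1 : ℕ) / n) Filter.atTop : ℝ) : EReal)
        = Dynamics.coverEntropy f (Set.Icc a b)) := by
  have hsep : SeparatesFibers f (Icc a b) (range c) := by
    rw [← hc0, ← hcl]
    exact .of_injOn_Icc fun i => (hlaps i).elim StrictMonoOn.injOn StrictAntiOn.injOn
  have hC : (range c).Finite := finite_range c
  have hrate (x : ℝ) : ((limsup (fun n : ℕ => Real.log (max (N n x) 1 : ℕ) / n) atTop : ℝ) : EReal)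
      = preimageGrowthRate f (Icc a b) x := by
    simp only [hN]
    exact hsep.coe_limsup_log_ncard_div_eq hC hmaps x
  have hupper (x : ℝ) : preimageGrowthRate f (Icc a b) x ≤ Dynamics.coverEntropy f (Icc a b) :=
    hsep.preimageGrowthRate_le_coverEntropy hmaps hcont (nonempty_Icc.2 hab.le) hC x
  obtain ⟨i, hi⟩ := Finite.exists_max fun i => preimageGrowthRate f (Icc a b) (c i)
  have hci : c i ∈ Icc a b :=
    ⟨hc0 ▸ hmono.monotone (Fin.zero_le i), hcl ▸ hmono.monotone (Fin.le_last i)⟩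
  simp only [hrate]
  exact ⟨fun x _ => hupper x, c i, hci, (hupper (c i)).antisymm
    (hsep.coverEntropy_le hmaps hcont hC le_sup_right (forall_mem_range.2 hi))⟩
end

section
/- Let μ ∈ ℝ with 0 < |μ| ≤ 1 and define f : ℝ∖{0} → ℝ∖{0} by f(x) = (1/μ)(x + 1/x) (note x + 1/x ≠ 0 for all real x ≠ 0, so all iterates are defined). Then for every x ≠ 0 the absolute values |fⁿ(x)| tend to +∞ as n → ∞; that is, every orbit in ℝ∖{0} is attracted to the fixed point ∞ of the induced map of the real circle ℝ ∪ {∞}. -/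
open Filter Topology

/-! The function `x ↦ x²` is a Lyapunov function: `(x + 1/x)² = x² + 2 + (1/x)²` and `|1/μ| ≥ 1`,
so its value grows by at least `2` at each step of the orbit. -/

theorem add_nsmul_le_iterate {α M : Type*} [AddCommMonoid M] [Preorder M]
    [IsOrderedAddMonoid M] {f : α → α} {s : Set α} {V : α → M} {c : M} (hs : Set.MapsTo f s s)
    (hV : ∀ y ∈ s, V y + c ≤ V (f y)) {x : α} (hx : x ∈ s) (n : ℕ) :
    V x + n • c ≤ V (f^[n] x) := by
  induction n with
  | zero => simp
  | succ n ih =>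
    calc V x + (n + 1) • c = V x + n • c + c := by rw [succ_nsmul, add_assoc]
      _ ≤ V (f^[n] x) + c := by gcongr
      _ ≤ V (f (f^[n] x)) := hV _ (hs.iterate n hx)
      _ = V (f^[n + 1] x) := by rw [Function.iterate_succ_apply']

theorem tendsto_iterate_atTop_of_add_le {α M : Type*} [AddCommGroup M] [LinearOrder M]
    [IsOrderedAddMonoid M] [Archimedean M] {f : α → α} {s : Set α} {V : α → M} {c : M}
    (hc : 0 < c) (hs : Set.MapsTo f s s) (hV : ∀ y ∈ s, V y + c ≤ V (f y)) {x : α}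
    (hx : x ∈ s) : Tendsto (fun n : ℕ => V (f^[n] x)) atTop atTop :=
  tendsto_atTop_mono (add_nsmul_le_iterate hs hV hx)
    (tendsto_atTop_add_const_left _ _ (tendsto_id.atTop_nsmul_const hc))

theorem tendsto_abs_atTop_of_tendsto_sq {ι R : Type*} [Ring R] [LinearOrder R]
    [IsStrictOrderedRing R] {l : Filter ι} {u : ι → R} (h : Tendsto (fun i => u i ^ 2) l atTop) :
    Tendsto (fun i => |u i|) l atTop := by
  refine tendsto_atTop.2 fun b => ?_
  filter_upwards [h.eventually_ge_atTop (b ^ 2)] with i hi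
  exact (le_abs_self b).trans (sq_le_sq.1 hi)

theorem sq_le_mul_sq_of_one_le_abs {R : Type*} [Ring R] [LinearOrder R]
    [IsStrictOrderedRing R] {a : R} (ha : 1 ≤ |a|) (y : R) : y ^ 2 ≤ (a * y) ^ 2 := by
  rw [sq_le_sq, abs_mul]
  exact le_mul_of_one_le_left (abs_nonneg y) ha

section Field

variable {K : Type*} [Field K] [LinearOrder K] [IsStrictOrderedRing K]

theorem sq_add_two_le_sq_add_one_div {x : K} (hx : x ≠ 0) : x ^ 2 + 2 ≤ (x + 1 / x) ^ 2 := by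
  calc x ^ 2 + 2 ≤ x ^ 2 + 2 + (1 / x) ^ 2 := le_add_of_nonneg_right (sq_nonneg _)
    _ = (x + 1 / x) ^ 2 := by field_simp; ring

theorem orbits_attracted_to_infinity_general [Archimedean K]
    (μ : K) (hμ0 : 0 < |μ|) (hμ1 : |μ| ≤ 1)
    (f : K → K) (hf : f = fun x => (1 / μ) * (x + 1 / x)) (x : K) (hx : x ≠ 0) :
    Tendsto (fun n : ℕ => |f^[n] x|) atTop atTop := by
  have hinv : 1 ≤ |1 / μ| := by
    rw [abs_one_div]
    exact one_le_one_div hμ0 hμ1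
  have hstep : ∀ y ∈ ({0}ᶜ : Set K), y ^ 2 + 2 ≤ f y ^ 2 := by
    intro y hy
    rw [hf]
    exact (sq_add_two_le_sq_add_one_div hy).trans (sq_le_mul_sq_of_one_le_abs hinv _)
  have hmaps : Set.MapsTo f {0}ᶜ {0}ᶜ := by
    intro y hy
    have hpos : 0 < f y ^ 2 := lt_of_lt_of_le (by positivity) (hstep y hy)
    exact sq_pos_iff.1 hpos
  exact tendsto_abs_atTop_of_tendsto_sq
    (tendsto_iterate_atTop_of_add_le (V := (· ^ 2)) two_pos hmaps hstep hx)

end Field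

/-- For `0 < |μ| ≤ 1` and `f(x) = (1/μ)(x + 1/x)`, every orbit in `ℝ∖{0}` is attracted to the
fixed point `∞` of the induced circle map: `|fⁿ(x)| → ∞`. -/
theorem orbits_attracted_to_infinity
    (μ : ℝ) (hμ0 : 0 < |μ|) (hμ1 : |μ| ≤ 1)
    (f : ℝ → ℝ) (hf : f = fun x => (1 / μ) * (x + 1 / x)) :
    ∀ x : ℝ, x ≠ 0 →
      Filter.Tendsto (fun n : ℕ => |f^[n] x|) Filter.atTop Filter.atTop :=
  orbits_attracted_to_infinity_general μ hμ0 hμ1 f hf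
end
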